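/- arXiv:2012.01492 — 2 statements merged into one kernel-verified Lean document; each statement's English description precedes it below -/
import Mathlib

section
/- Let d = d(n) be a sequence of positive integers with d(n)·n even, d(n) → ∞, and d(n)⁵/n² → 0 as n → ∞. Let Z_{C₃} be the number of triangles in 𝒢(n,d), μ_{C₃} = E Z_{C₃}, and σ²_{C₃} = Var(Z_{C₃}). Then σ²_{C₃}/μ_{C₃} → 1 and μ_{C₃}/((d−1)³/6) → 1 as n → ∞. -/
open Filter

noncomputable section

/-- The degree of the vertex `v` in the simple graph `G`. -/
def deg {n : ℕ} (G : SimpleGraph (Fin n)) (v : Fin n) : ℕ := (G.neighborSet v).ncard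

/-- The number of triangles of `G` (triples of pairwise adjacent vertices). -/
def triCount {n : ℕ} (G : SimpleGraph (Fin n)) : ℕ := (G.cliqueSet 3).ncard

/-- The expectation of `X` for a graph chosen uniformly at random among all simple graphs
on `[n]` satisfying `base`. -/
def expect {n : ℕ} (base : SimpleGraph (Fin n) → Prop) (X : SimpleGraph (Fin n) → ℝ) : ℝ :=
  (∑ᶠ G ∈ {G : SimpleGraph (Fin n) | base G}, X G) /
    (Nat.card {G : SimpleGraph (Fin n) // base G} : ℝ)

namespace RegularTriangles

open scoped Classical

variable {V : Type*}

/-- The real-valued indicator of a proposition. -/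
def ind (p : Prop) : ℝ := if p then 1 else 0

lemma ind_nonneg (p : Prop) : 0 ≤ ind p := by unfold ind; split_ifs <;> norm_num

lemma ind_le_one (p : Prop) : ind p ≤ 1 := by unfold ind; split_ifs <;> norm_num

lemma ind_of {p : Prop} (h : p) : ind p = 1 := if_pos h

lemma ind_of_not {p : Prop} (h : ¬p) : ind p = 0 := if_neg h

lemma ind_mono {p q : Prop} (h : p → q) : ind p ≤ ind q := by
  by_cases hp : p
  · rw [ind_of hp, ind_of (h hp)]
  · rw [ind_of_not hp]; exact ind_nonneg q

lemma ind_and (p q : Prop) : ind (p ∧ q) = ind p * ind q := by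
  by_cases hp : p <;> by_cases hq : q <;> simp [ind, hp, hq]

/-- `G` is `d`-regular. -/
def Reg (d : ℕ) (G : SimpleGraph V) : Prop := ∀ v, (G.neighborSet v).ncard = d

/-- The `4`-cycle `a b y x` has its edges `ab`, `xy` in `G` and its edges `ax`, `by` outside. -/
def Valid (G : SimpleGraph V) (a b x y : V) : Prop :=
  G.Adj a b ∧ G.Adj x y ∧ a ≠ x ∧ b ≠ y ∧ ¬G.Adj a x ∧ ¬G.Adj b y

/-- The graph obtained from `G` by exchanging edges and non-edges on the cycle `a b y x`. -/
def switch (G : SimpleGraph V) (a b x y : V) : SimpleGraph V where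
  Adj u v := ¬(G.Adj u v ↔
    (SimpleGraph.fromEdgeSet {s(a, b), s(x, y), s(a, x), s(b, y)}).Adj u v)
  symm := ⟨fun u v h => by
    rwa [G.adj_comm v u, SimpleGraph.adj_comm _ v u]⟩
  loopless := ⟨fun u => by simp⟩

lemma switch_adj_iff (G : SimpleGraph V) (a b x y u v : V) :
    (switch G a b x y).Adj u v ↔ ¬(G.Adj u v ↔
      (SimpleGraph.fromEdgeSet {s(a, b), s(x, y), s(a, x), s(b, y)}).Adj u v) := Iff.rfl

lemma switch_switch (G : SimpleGraph V) (a b x y : V) :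
    switch (switch G a b x y) a x b y = G := by
  ext u v
  have : ({s(a, b), s(x, y), s(a, x), s(b, y)} : Set (Sym2 V)) =
      {s(a, x), s(b, y), s(a, b), s(x, y)} := by
    ext e; simp only [Set.mem_insert_iff, Set.mem_singleton_iff]; tauto
  rw [switch_adj_iff, switch_adj_iff, this]
  tauto

lemma Valid.ne {G : SimpleGraph V} {a b x y : V} (h : Valid G a b x y) :
    a ≠ b ∧ x ≠ y ∧ a ≠ x ∧ b ≠ y ∧ a ≠ y ∧ b ≠ x := by
  obtain ⟨h1, h2, h3, h4, h5, h6⟩ := h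
  refine ⟨h1.ne, h2.ne, h3, h4, ?_, ?_⟩
  · rintro rfl; exact h6 h1.symm
  · rintro rfl; exact h5 h1

lemma Valid.switch_adj {G : SimpleGraph V} {a b x y : V} (h : Valid G a b x y) (u v : V) :
    (switch G a b x y).Adj u v ↔
      (G.Adj u v ∧ s(u, v) ≠ s(a, b) ∧ s(u, v) ≠ s(x, y)) ∨
        s(u, v) = s(a, x) ∨ s(u, v) = s(b, y) := by
  obtain ⟨h1, h2, h3, h4, h5, h6⟩ := h
  have e1 : s(u, v) = s(a, b) → G.Adj u v := fun e => by
    rwa [← SimpleGraph.mem_edgeSet, e]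
  have e2 : s(u, v) = s(x, y) → G.Adj u v := fun e => by
    rwa [← SimpleGraph.mem_edgeSet, e]
  have e3 : s(u, v) = s(a, x) → ¬G.Adj u v := fun e => by
    rwa [← SimpleGraph.mem_edgeSet, e]
  have e4 : s(u, v) = s(b, y) → ¬G.Adj u v := fun e => by
    rwa [← SimpleGraph.mem_edgeSet, e]
  have e5 : s(u, v) = s(a, x) → u ≠ v := by
    rintro e rfl
    have := Sym2.eq_iff.1 e
    rcases this with ⟨r, s⟩ | ⟨r, s⟩ <;> exact h3 (by simp [← r, ← s])
  have e6 : s(u, v) = s(b, y) → u ≠ v := by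
    rintro e rfl
    have := Sym2.eq_iff.1 e
    rcases this with ⟨r, s⟩ | ⟨r, s⟩ <;> exact h4 (by simp [← r, ← s])
  have e7 : G.Adj u v → u ≠ v := fun h => h.ne
  rw [switch_adj_iff, SimpleGraph.fromEdgeSet_adj]
  simp only [Set.mem_insert_iff, Set.mem_singleton_iff]
  by_cases k1 : s(u, v) = s(a, b)
  · have q1 := e1 k1
    have q2 : ¬s(u, v) = s(a, x) := fun k => e3 k q1
    have q3 : ¬s(u, v) = s(b, y) := fun k => e4 k q1
    have q4 := e7 q1
    grind
  by_cases k2 : s(u, v) = s(x, y)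
  · have q1 := e2 k2
    have q2 : ¬s(u, v) = s(a, x) := fun k => e3 k q1
    have q3 : ¬s(u, v) = s(b, y) := fun k => e4 k q1
    have q4 := e7 q1
    grind
  by_cases k3 : s(u, v) = s(a, x)
  · simp [k3, e3 k3, e5 k3]
  by_cases k4 : s(u, v) = s(b, y)
  · simp [k4, e4 k4, e6 k4]
  simp [k1, k2, k3, k4]

lemma Valid.switch {G : SimpleGraph V} {a b x y : V} (h : Valid G a b x y) :
    Valid (switch G a b x y) a x b y := by
  obtain ⟨n1, n2, n3, n4, n5, n6⟩ := h.ne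
  refine ⟨?_, ?_, n1, n2, ?_, ?_⟩ <;> rw [h.switch_adj] <;> simp <;> grind

lemma Valid.reg_switch {G : SimpleGraph V} {a b x y : V} (h : Valid G a b x y) {d : ℕ}
    [Finite V] (hG : Reg d G) : Reg d (RegularTriangles.switch G a b x y) := by
  obtain ⟨n1, n2, n3, n4, n5, n6⟩ := h.ne
  have key : ∀ w p q, G.Adj w q → ¬G.Adj w p →
      (∀ v, (RegularTriangles.switch G a b x y).Adj w v ↔ v = p ∨ (G.Adj w v ∧ v ≠ q)) →
      ((RegularTriangles.switch G a b x y).neighborSet w).ncard = d := by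
    intro w p q hq hp hw
    have : (RegularTriangles.switch G a b x y).neighborSet w
        = insert p (G.neighborSet w \ {q}) := by
      ext v; simp [hw]
    rw [this, Set.ncard_exchange (by simpa using hp) (by simpa using hq), hG w]
  have h' := h
  obtain ⟨h1, h2, h3, h4, h5, h6⟩ := h'
  have c1 := h1.symm
  have c2 := h2.symm
  have c5 : ¬G.Adj x a := fun h => h5 h.symm
  have c6 : ¬G.Adj y b := fun h => h6 h.symm
  intro w
  by_cases wa : w = a
  · subst wa; refine key w x b h1 h5 fun v => ?_
    rw [h.switch_adj]; simp only [Sym2.eq_iff, ne_eq]; grind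
  by_cases wb : w = b
  · subst wb; refine key w y a h1.symm h6 fun v => ?_
    rw [h.switch_adj]; simp only [Sym2.eq_iff, ne_eq]; grind
  by_cases wx : w = x
  · subst wx; refine key w a y h2 c5 fun v => ?_
    rw [h.switch_adj]; simp only [Sym2.eq_iff, ne_eq]; grind
  by_cases wy : w = y
  · subst wy; refine key w b x c2 c6 fun v => ?_
    rw [h.switch_adj]; simp only [Sym2.eq_iff, ne_eq]; grind
  rw [← hG w]
  congr 1
  ext v
  simp only [SimpleGraph.mem_neighborSet]
  rw [h.switch_adj]; simp only [Sym2.eq_iff, ne_eq]; grind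

variable [Fintype V]

/-- The finite set of all `d`-regular graphs on `V`. -/
def Om (V : Type*) [Fintype V] (d : ℕ) : Finset (SimpleGraph V) :=
  Finset.univ.filter (Reg d)

lemma mem_Om {d : ℕ} {G : SimpleGraph V} : G ∈ Om V d ↔ Reg d G := by simp [Om]

/-- The sum of `F` over all valid quadruples of `G`. -/
def vsum (G : SimpleGraph V) (F : V → V → V → V → ℝ) : ℝ :=
  ∑ a, ∑ b, ∑ x, ∑ y, ind (Valid G a b x y) * F a b x y

lemma vsum_eq (G : SimpleGraph V) (F : V → V → V → V → ℝ) :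
    vsum G F = ∑ q ∈ Finset.univ.filter fun q : V × V × V × V =>
      Valid G q.1 q.2.1 q.2.2.1 q.2.2.2, F q.1 q.2.1 q.2.2.1 q.2.2.2 := by
  rw [Finset.sum_filter, Fintype.sum_prod_type]
  simp only [Fintype.sum_prod_type, vsum, ind, ite_mul, one_mul, zero_mul]

/-- Switching is an involution on pairs of a regular graph and a valid quadruple. -/
lemma sum_vsum_switch (d : ℕ) (F : SimpleGraph V → V → V → V → V → ℝ) :
    ∑ G ∈ Om V d, vsum G (F G) =
      ∑ G ∈ Om V d, vsum G fun a b x y => F (switch G a b x y) a x b y := by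
  simp only [vsum_eq]
  rw [Finset.sum_sigma', Finset.sum_sigma']
  refine Finset.sum_bij'
    (fun p _ => ⟨switch p.1 p.2.1 p.2.2.1 p.2.2.2.1 p.2.2.2.2,
      (p.2.1, p.2.2.2.1, p.2.2.1, p.2.2.2.2)⟩)
    (fun p _ => ⟨switch p.1 p.2.1 p.2.2.1 p.2.2.2.1 p.2.2.2.2,
      (p.2.1, p.2.2.2.1, p.2.2.1, p.2.2.2.2)⟩) ?_ ?_ ?_ ?_ ?_
  · rintro ⟨G, a, b, x, y⟩ h
    simp only [Finset.mem_sigma, mem_Om, Finset.mem_filter, Finset.mem_univ, true_and] at h ⊢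
    exact ⟨h.2.reg_switch h.1, h.2.switch⟩
  · rintro ⟨G, a, b, x, y⟩ h
    simp only [Finset.mem_sigma, mem_Om, Finset.mem_filter, Finset.mem_univ, true_and] at h ⊢
    exact ⟨h.2.reg_switch h.1, h.2.switch⟩
  · rintro ⟨G, a, b, x, y⟩ h
    simp [switch_switch]
  · rintro ⟨G, a, b, x, y⟩ h
    simp [switch_switch]
  · rintro ⟨G, a, b, x, y⟩ h
    simp [switch_switch]

lemma Reg.sum_ind {d : ℕ} {G : SimpleGraph V} (hG : Reg d G) (u : V) :
    ∑ v, ind (G.Adj u v) = d := by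
  rw [← hG u, Set.ncard_eq_toFinset_card']
  simp only [ind, Finset.sum_boole]
  congr 2
  ext v; simp

lemma Reg.sum_ind' {d : ℕ} {G : SimpleGraph V} (hG : Reg d G) (u : V) :
    ∑ v, ind (G.Adj v u) = d := by
  simp_rw [G.adj_comm _ u, hG.sum_ind u]

lemma sum_ind_eq_mul (u : V) (f : V → ℝ) : ∑ a, ind (a = u) * f a = f u := by
  simp [ind]

lemma sum_ind_eq_one (u : V) : ∑ a, ind (a = u) = 1 := by simp [ind]

lemma Reg.sum_sum_ind {d : ℕ} {G : SimpleGraph V} (hG : Reg d G) :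
    ∑ x, ∑ y, ind (G.Adj x y) = Fintype.card V * d := by
  simp [hG.sum_ind]

lemma Reg.sum_sum_ind_mul {d : ℕ} {G : SimpleGraph V} (hG : Reg d G) (u v : V) :
    ∑ x, ∑ y, ind (G.Adj x y) *
      (ind (x = u) + ind (G.Adj u x) + ind (y = v) + ind (G.Adj v y)) = 2 * d * (d + 1) := by
  have h1 : ∑ x, ∑ y, ind (G.Adj x y) * (ind (x = u) + ind (G.Adj u x)) = d * (d + 1) := by
    simp_rw [← Finset.sum_mul, hG.sum_ind, ← Finset.mul_sum, Finset.sum_add_distrib, hG.sum_ind]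
    simp only [sum_ind_eq_one]; ring
  have h2 : ∑ x, ∑ y, ind (G.Adj x y) * (ind (y = v) + ind (G.Adj v y)) = d * (d + 1) := by
    rw [Finset.sum_comm]
    simp_rw [← Finset.sum_mul, hG.sum_ind', ← Finset.mul_sum, Finset.sum_add_distrib, hG.sum_ind]
    simp only [sum_ind_eq_one]; ring
  calc _ = ∑ x, ∑ y, ind (G.Adj x y) * (ind (x = u) + ind (G.Adj u x))
      + ∑ x, ∑ y, ind (G.Adj x y) * (ind (y = v) + ind (G.Adj v y)) := by
        simp_rw [← Finset.sum_add_distrib]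
        refine Finset.sum_congr rfl fun x _ => Finset.sum_congr rfl fun y _ => by ring
    _ = _ := by rw [h1, h2]; ring

omit [Fintype V] in
lemma le_ind_valid {G : SimpleGraph V} {u v : V} (h : G.Adj u v) (x y : V) :
    ind (G.Adj x y) - ind (G.Adj x y) *
      (ind (x = u) + ind (G.Adj u x) + ind (y = v) + ind (G.Adj v y)) ≤ ind (Valid G u v x y) := by
  by_cases h1 : Valid G u v x y
  · rw [ind_of h1]
    have := ind_le_one (G.Adj x y)
    have := mul_nonneg (ind_nonneg (G.Adj x y)) (add_nonneg (add_nonneg (add_nonneg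
      (ind_nonneg (x = u)) (ind_nonneg (G.Adj u x))) (ind_nonneg (y = v))) (ind_nonneg (G.Adj v y)))
    linarith
  · rw [ind_of_not h1]
    by_cases h0 : G.Adj x y
    · rw [ind_of h0]
      have n1 := ind_nonneg (x = u)
      have n2 := ind_nonneg (G.Adj u x)
      have n3 := ind_nonneg (y = v)
      have n4 := ind_nonneg (G.Adj v y)
      have : x = u ∨ G.Adj u x ∨ y = v ∨ G.Adj v y := by
        unfold Valid at h1
        by_contra hc
        push Not at hc
        exact h1 ⟨h, h0, hc.1.symm, hc.2.2.1.symm, hc.2.1, hc.2.2.2⟩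
      rcases this with h | h | h | h <;> rw [ind_of h] at * <;> linarith
    · rw [ind_of_not h0]; simp

lemma Reg.le_sum_valid {d : ℕ} {G : SimpleGraph V} (hG : Reg d G) {u v : V} (h : G.Adj u v) :
    (Fintype.card V * d - 2 * d * (d + 1) : ℝ) ≤ ∑ x, ∑ y, ind (Valid G u v x y) := by
  rw [← hG.sum_sum_ind, ← hG.sum_sum_ind_mul u v, ← Finset.sum_sub_distrib]
  refine Finset.sum_le_sum fun x _ => ?_
  rw [← Finset.sum_sub_distrib]
  exact Finset.sum_le_sum fun y _ => le_ind_valid h x y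

lemma Reg.sum_valid_le {d : ℕ} {G : SimpleGraph V} (hG : Reg d G) (u v : V) :
    ∑ x, ∑ y, ind (Valid G u v x y) ≤ (Fintype.card V * d : ℝ) := by
  rw [← hG.sum_sum_ind]
  exact Finset.sum_le_sum fun x _ => Finset.sum_le_sum fun y _ => ind_mono fun h => h.2.1

lemma sum_ind_mem_le (S : Finset (Sym2 V)) : ∑ x, ∑ y, ind (s(x, y) ∈ S) ≤ 2 * S.card := by
  induction S using Finset.induction_on with
  | empty => simp [ind]
  | insert e S he ih =>
    have h1 : ∑ x, ∑ y, ind (s(x, y) = e) ≤ 2 := by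
      induction e using Sym2.ind with | _ p q
      calc ∑ x, ∑ y, ind (s(x, y) = s(p, q))
          ≤ ∑ x, ∑ y, (ind (x = p) * ind (y = q) + ind (x = q) * ind (y = p)) := by
            refine Finset.sum_le_sum fun x _ => Finset.sum_le_sum fun y _ => ?_
            rw [← ind_and, ← ind_and]
            by_cases h : s(x, y) = s(p, q)
            · rw [ind_of h]
              have n1 := ind_nonneg (x = p ∧ y = q)
              have n2 := ind_nonneg (x = q ∧ y = p)
              rcases Sym2.eq_iff.1 h with h | h <;> rw [ind_of h] at * <;> linarith
            · rw [ind_of_not h]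
              exact add_nonneg (ind_nonneg _) (ind_nonneg _)
        _ = 2 := by
            simp_rw [Finset.sum_add_distrib, ← Finset.mul_sum, ← Finset.sum_mul]
            simp [ind]; norm_num
    have h2 : ∑ x, ∑ y, ind (s(x, y) ∈ insert e S) ≤
        ∑ x, ∑ y, ind (s(x, y) = e) + ∑ x, ∑ y, ind (s(x, y) ∈ S) := by
      simp_rw [← Finset.sum_add_distrib]
      refine Finset.sum_le_sum fun x _ => Finset.sum_le_sum fun y _ => ?_
      have n1 := ind_nonneg (s(x, y) = e)
      have n2 := ind_nonneg (s(x, y) ∈ S)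
      by_cases h : s(x, y) ∈ insert e S
      · rw [ind_of h]
        rcases Finset.mem_insert.1 h with h | h <;> rw [ind_of h] at * <;> linarith
      · rw [ind_of_not h]; linarith
    rw [Finset.card_insert_of_notMem he]
    push_cast
    linarith

/-- The number of `d`-regular graphs on `V` that contain all edges in `S`. -/
def cnt (d : ℕ) (S : Finset (Sym2 V)) : ℝ := ∑ G ∈ Om V d, ind (∀ e ∈ S, e ∈ G.edgeSet)

lemma cnt_insert_mul_le (d : ℕ) (S : Finset (Sym2 V)) (e : Sym2 V) (he : e ∉ S) :
    cnt d (insert e S) * (Fintype.card V * d - 2 * d * (d + 1) - 2 * S.card) ≤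
      d ^ 2 * cnt d S := by
  induction e using Sym2.ind with | _ u v
  have key := sum_vsum_switch (V := V) d fun G a b x y =>
    ind (a = u) * (ind (b = v) * (ind (s(x, y) ∉ S) * ind (∀ e ∈ S, e ∈ G.edgeSet)))
  have collapse : ∀ (G : SimpleGraph V) (f : V → V → V → V → ℝ),
      vsum G (fun a b x y => ind (a = u) * (ind (b = v) * f a b x y)) =
        ∑ x, ∑ y, ind (Valid G u v x y) * f u v x y := by
    intro G f
    have : ∀ a b, ∑ x, ∑ y, ind (Valid G a b x y) * (ind (a = u) * (ind (b = v) * f a b x y)) =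
        ind (a = u) * (ind (b = v) * ∑ x, ∑ y, ind (Valid G a b x y) * f a b x y) := by
      intro a b
      simp_rw [Finset.mul_sum]
      refine Finset.sum_congr rfl fun x _ => Finset.sum_congr rfl fun y _ => by ring
    simp only [vsum, this]
    simp_rw [← Finset.mul_sum]
    rw [sum_ind_eq_mul, sum_ind_eq_mul]
  have collapse' : ∀ (G : SimpleGraph V) (f : V → V → V → V → ℝ),
      vsum G (fun a b x y => ind (a = u) * (ind (x = v) * f a b x y)) =
        ∑ b, ∑ y, ind (Valid G u b v y) * f u b v y := by
    intro G f
    have : ∀ a b x, ∑ y, ind (Valid G a b x y) * (ind (a = u) * (ind (x = v) * f a b x y)) =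
        ind (a = u) * (ind (x = v) * ∑ y, ind (Valid G a b x y) * f a b x y) := by
      intro a b x
      simp_rw [Finset.mul_sum]
      refine Finset.sum_congr rfl fun y _ => by ring
    simp only [vsum, this]
    simp_rw [← Finset.mul_sum]
    rw [sum_ind_eq_mul]
    simp_rw [sum_ind_eq_mul]
  rw [cnt, cnt, Finset.sum_mul, Finset.mul_sum]
  refine le_trans (le_trans (Finset.sum_le_sum fun G hG => ?_) key.le)
    (Finset.sum_le_sum fun G hG => ?_)
  · rw [mem_Om] at hG
    rw [collapse]
    by_cases hS : ∀ e ∈ insert s(u, v) S, e ∈ G.edgeSet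
    · have huv : G.Adj u v := hS s(u, v) (Finset.mem_insert_self _ _)
      have hS' : ∀ e ∈ S, e ∈ G.edgeSet := fun e he => hS e (Finset.mem_insert_of_mem he)
      rw [ind_of hS, ind_of hS', one_mul]
      have h1 := hG.le_sum_valid huv
      have h2 := sum_ind_mem_le S
      have h3 : ∑ x, ∑ y, ind (Valid G u v x y) ≤
          ∑ x, ∑ y, ind (Valid G u v x y) * (ind (s(x, y) ∉ S) * 1) +
            ∑ x, ∑ y, ind (s(x, y) ∈ S) := by
        simp_rw [← Finset.sum_add_distrib]
        refine Finset.sum_le_sum fun x _ => Finset.sum_le_sum fun y _ => ?_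
        have := ind_le_one (Valid G u v x y)
        by_cases h : s(x, y) ∈ S <;> simp [ind, h]
        split_ifs <;> norm_num
      linarith
    · rw [ind_of_not hS, zero_mul]
      exact Finset.sum_nonneg fun x _ => Finset.sum_nonneg fun y _ => mul_nonneg (ind_nonneg _)
        (mul_nonneg (ind_nonneg _) (ind_nonneg _))
  · rw [mem_Om] at hG
    rw [collapse']
    have : ∀ b y, ind (Valid G u b v y) * (ind (s(b, y) ∉ S) *
        ind (∀ e ∈ S, e ∈ (switch G u b v y).edgeSet)) ≤
        ind (∀ e ∈ S, e ∈ G.edgeSet) * (ind (G.Adj u b) * ind (G.Adj v y)) := by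
      intro b y
      rw [← ind_and, ← ind_and, ← ind_and, ← ind_and]
      refine ind_mono ?_
      rintro ⟨h1, h2, h3⟩
      refine ⟨fun e heS => ?_, h1.1, h1.2.1⟩
      have h4 := h3 e heS
      induction e using Sym2.ind with | _ p q
      rw [SimpleGraph.mem_edgeSet, h1.switch_adj] at h4
      rcases h4 with h4 | h4 | h4
      · exact h4.1
      · exact absurd (h4 ▸ heS) he
      · exact absurd (h4 ▸ heS) h2
    refine (Finset.sum_le_sum fun b _ => Finset.sum_le_sum fun y _ => this b y).trans ?_
    simp_rw [← Finset.mul_sum, hG.sum_ind, ← Finset.sum_mul, hG.sum_ind]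
    apply le_of_eq; ring

lemma cnt_nonneg (d : ℕ) (S : Finset (Sym2 V)) : 0 ≤ cnt d S :=
  Finset.sum_nonneg fun _ _ => ind_nonneg _

/-- The probability that a fixed small set of edges is present is `O(d / n)` per edge. -/
lemma cnt_le {d : ℕ} (hd : 0 < d) (hn : 4 * d + 44 ≤ Fintype.card V) (S : Finset (Sym2 V))
    (hS : S.card ≤ 10) :
    cnt d S ≤ (2 * d / Fintype.card V : ℝ) ^ S.card * (Om V d).card := by
  induction S using Finset.induction_on with
  | empty => simp [cnt, ind]
  | insert e S he ih =>
    rw [Finset.card_insert_of_notMem he] at hS ⊢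
    have h1 := cnt_insert_mul_le d S e he
    have h2 := ih (by omega)
    have hn' : (4 * d + 44 : ℝ) ≤ Fintype.card V := by exact_mod_cast hn
    have hd' : (1 : ℝ) ≤ d := by exact_mod_cast hd
    have hS' : (S.card : ℝ) ≤ 10 := by exact_mod_cast (by omega : S.card ≤ 10)
    have hpos : (0 : ℝ) < Fintype.card V := by linarith
    set n : ℝ := (Fintype.card V : ℝ)
    have h3 : n * d / 2 ≤ n * d - 2 * d * (d + 1) - 2 * S.card := by nlinarith
    have h4 : cnt d (insert e S) * (n * d / 2) ≤ d ^ 2 * cnt d S :=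
      (mul_le_mul_of_nonneg_left h3 (cnt_nonneg _ _)).trans h1
    have h5 : cnt d (insert e S) ≤ 2 * d / n * cnt d S := by
      rw [div_mul_eq_mul_div, le_div_iff₀ hpos]
      have : (0 : ℝ) < d := by linarith
      refine le_of_mul_le_mul_right ?_ this
      nlinarith
    calc _ ≤ 2 * d / n * cnt d S := h5
      _ ≤ 2 * d / n * ((2 * d / n) ^ S.card * (Om V d).card) := by gcongr
      _ = _ := by ring

lemma sum_vecCons {k : ℕ} (φ : (Fin (k + 1) → V) → ℝ) :
    ∑ f, φ f = ∑ x, ∑ f : Fin k → V, φ (Matrix.vecCons x f) := by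
  rw [← (Fin.consEquiv fun _ => V).sum_comp, Fintype.sum_prod_type]
  rfl

lemma sum_pow_card_le {ρ : ℝ} (hρ : 0 ≤ ρ) (h1 : 1 ≤ Fintype.card V * ρ) (k r : ℕ)
    (U : Finset V) (hU : U.card ≤ r) :
    ∑ q : Fin k → V, ρ ^ (U ∪ Finset.univ.image q).card ≤
      ((r + k) * (Fintype.card V * ρ)) ^ k * ρ ^ U.card := by
  induction k generalizing r U with
  | zero => simp
  | succ k ih =>
    rw [sum_vecCons]
    have step : ∀ x, ∑ q : Fin k → V, ρ ^ (U ∪ Finset.univ.image (Matrix.vecCons x q)).card ≤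
        ((r + 1 + k) * (Fintype.card V * ρ)) ^ k * ρ ^ (insert x U).card := by
      intro x
      have := ih (r + 1) (insert x U) ((Finset.card_insert_le _ _).trans (by omega))
      push_cast at this
      refine le_trans (le_of_eq ?_) this
      refine Finset.sum_congr rfl fun q _ => ?_
      congr 2
      ext y
      simp only [Finset.mem_union, Finset.mem_image, Finset.mem_univ, true_and, Fin.exists_fin_succ,
        Matrix.cons_val_zero, Matrix.cons_val_succ, Finset.mem_insert]
      grind
    have hsum : ∑ x, ρ ^ (insert x U).card ≤ (r + 1) * (Fintype.card V * ρ) * ρ ^ U.card := by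
      have : ∀ x, ρ ^ (insert x U).card ≤ ind (x ∈ U) * ρ ^ U.card + ρ * ρ ^ U.card := by
        intro x
        by_cases hx : x ∈ U
        · rw [ind_of hx, Finset.insert_eq_of_mem hx]
          have : 0 ≤ ρ * ρ ^ U.card := by positivity
          linarith
        · rw [ind_of_not hx, Finset.card_insert_of_notMem hx, pow_succ]
          linarith
      refine (Finset.sum_le_sum fun x _ => this x).trans ?_
      rw [Finset.sum_add_distrib, ← Finset.sum_mul]
      have hc : ∑ x, ind (x ∈ U) = U.card := by
        have : ∀ x, ind (x ∈ U) = if x ∈ U then 1 else 0 := fun x => by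
          by_cases h : x ∈ U <;> simp [ind, h]
        simp [this]
      have hr : (U.card : ℝ) ≤ r := by exact_mod_cast hU
      have hp : 0 ≤ ρ ^ U.card := by positivity
      rw [hc, Finset.sum_const, Finset.card_univ, nsmul_eq_mul]
      have : (U.card : ℝ) ≤ r * (Fintype.card V * ρ) := by
        have : (0 : ℝ) ≤ r := by positivity
        nlinarith
      nlinarith
    calc _ ≤ ∑ x, ((r + 1 + k) * (Fintype.card V * ρ)) ^ k * ρ ^ (insert x U).card :=
          Finset.sum_le_sum fun x _ => step x
      _ = ((r + 1 + k) * (Fintype.card V * ρ)) ^ k * ∑ x, ρ ^ (insert x U).card := by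
          rw [Finset.mul_sum]
      _ ≤ ((r + 1 + k) * (Fintype.card V * ρ)) ^ k *
          ((r + 1) * (Fintype.card V * ρ) * ρ ^ U.card) := by gcongr
      _ ≤ ((r + 1 + k) * (Fintype.card V * ρ)) ^ k *
          ((r + 1 + k) * (Fintype.card V * ρ) * ρ ^ U.card) := by
          have : (r : ℝ) + 1 ≤ r + 1 + k := le_add_of_nonneg_right k.cast_nonneg
          refine mul_le_mul_of_nonneg_left (mul_le_mul_of_nonneg_right
            (mul_le_mul_of_nonneg_right this ?_) ?_) ?_ <;> positivity
      _ = _ := by push_cast; ring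

/-- `f` traverses a cycle of `G`. -/
def IsCyc {k : ℕ} [NeZero k] (G : SimpleGraph V) (f : Fin k → V) : Prop :=
  Function.Injective f ∧ ∀ i, G.Adj (f i) (f (i + 1))

/-- The number of cycles of length `k` in `G` with a starting point and a direction. -/
def cyc (k : ℕ) [NeZero k] (G : SimpleGraph V) : ℝ := ∑ f : Fin k → V, ind (IsCyc G f)

lemma cyc_nonneg (k : ℕ) [NeZero k] (G : SimpleGraph V) : 0 ≤ cyc k G :=
  Finset.sum_nonneg fun _ _ => ind_nonneg _

/-- The edges of the closed walk along `f`. -/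
def cycEdges {k : ℕ} [NeZero k] (f : Fin k → V) : Finset (Sym2 V) :=
  Finset.univ.image fun i => s(f i, f (i + 1))

omit [Fintype V] in
lemma injective_cycEdge {k : ℕ} [NeZero k] (hk : ∀ i : Fin k, i + 1 + 1 ≠ i) {f : Fin k → V}
    (hf : Function.Injective f) : Function.Injective fun i => s(f i, f (i + 1)) := by
  intro i j h
  rcases Sym2.eq_iff.1 h with ⟨h, -⟩ | ⟨h1, h2⟩
  · exact hf h
  · have e1 := hf h1
    have e2 := hf h2
    exact absurd (by rw [e2, ← e1]) (hk i)

omit [Fintype V] in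
lemma card_image_union_le {k : ℕ} [NeZero k] (hk : ∀ i : Fin k, i + 1 + 1 ≠ i) {p q : Fin k → V}
    (hp : Function.Injective p) (hq : Function.Injective q) :
    (Finset.univ.image p ∪ Finset.univ.image q).card ≤ (cycEdges p ∪ cycEdges q).card := by
  set J := Finset.univ.filter fun j => q j ∉ Finset.univ.image p
  have h1 : Finset.univ.image p ∪ Finset.univ.image q ⊆ Finset.univ.image p ∪ J.image q := by
    intro v hv
    simp only [J, Finset.mem_union, Finset.mem_image, Finset.mem_univ, true_and,
      Finset.mem_filter] at hv ⊢
    grind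
  have h2 : cycEdges p ∪ J.image (fun i => s(q i, q (i + 1))) ⊆ cycEdges p ∪ cycEdges q :=
    Finset.union_subset_union_right (Finset.image_subset_image (Finset.subset_univ _))
  have h3 : Disjoint (cycEdges p) (J.image fun i => s(q i, q (i + 1))) := by
    rw [Finset.disjoint_left]
    intro e he he'
    simp only [cycEdges, Finset.mem_image, Finset.mem_univ, true_and] at he he'
    obtain ⟨i, rfl⟩ := he
    obtain ⟨j, hj, h⟩ := he'
    simp only [J, Finset.mem_filter, Finset.mem_univ, true_and, Finset.mem_image,
      not_exists] at hj
    rcases Sym2.eq_iff.1 h with ⟨h, -⟩ | ⟨h, -⟩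
    · exact hj _ h.symm
    · exact hj _ h.symm
  calc _ ≤ (Finset.univ.image p ∪ J.image q).card := Finset.card_le_card h1
    _ ≤ (Finset.univ.image p).card + (J.image q).card := Finset.card_union_le _ _
    _ = (cycEdges p).card + (J.image fun i => s(q i, q (i + 1))).card := by
        rw [cycEdges, Finset.card_image_of_injective _ hp, Finset.card_image_of_injective _ hq,
          Finset.card_image_of_injective _ (injective_cycEdge hk hp),
          Finset.card_image_of_injective _ (injective_cycEdge hk hq)]
    _ = (cycEdges p ∪ J.image fun i => s(q i, q (i + 1))).card :=
        (Finset.card_union_of_disjoint h3).symm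
    _ ≤ _ := Finset.card_le_card h2

/-- The second moment of the number of `k`-cycles is `O(d ^ (2 * k))`. -/
lemma sum_cyc_sq_le {d : ℕ} (hd : 0 < d) (hn : 4 * d + 44 ≤ Fintype.card V) (k : ℕ) [NeZero k]
    (hk : ∀ i : Fin k, i + 1 + 1 ≠ i) (hk5 : k ≤ 5) :
    ∑ G ∈ Om V d, cyc k G ^ 2 ≤ (8 * k ^ 2) ^ k * d ^ (2 * k) * (Om V d).card := by
  set ρ : ℝ := 2 * d / Fintype.card V with hρ
  have hn' : (4 * d + 44 : ℝ) ≤ Fintype.card V := by exact_mod_cast hn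
  have hd' : (1 : ℝ) ≤ d := by exact_mod_cast hd
  have hpos : (0 : ℝ) < Fintype.card V := by linarith
  have hρ0 : 0 ≤ ρ := by positivity
  have hρ1 : ρ ≤ 1 := by rw [hρ, div_le_one hpos]; linarith
  have hnρ : Fintype.card V * ρ = 2 * d := by rw [hρ]; field_simp
  have pair : ∀ p q : Fin k → V, ∑ G ∈ Om V d, ind (IsCyc G p) * ind (IsCyc G q) ≤
      ρ ^ (Finset.univ.image p ∪ Finset.univ.image q).card * (Om V d).card := by
    intro p q
    by_cases h : Function.Injective p ∧ Function.Injective q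
    · have hcard : (cycEdges p ∪ cycEdges q).card ≤ 10 := by
        have h1 : (cycEdges p).card ≤ k := Finset.card_image_le.trans (by simp)
        have h2 : (cycEdges q).card ≤ k := Finset.card_image_le.trans (by simp)
        have := Finset.card_union_le (cycEdges p) (cycEdges q)
        omega
      calc _ ≤ cnt d (cycEdges p ∪ cycEdges q) := by
            refine Finset.sum_le_sum fun G _ => ?_
            rw [← ind_and]
            refine ind_mono ?_
            rintro ⟨⟨-, h1⟩, -, h2⟩ e he
            simp only [cycEdges, Finset.mem_union, Finset.mem_image, Finset.mem_univ,
              true_and] at he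
            rcases he with ⟨i, rfl⟩ | ⟨i, rfl⟩
            · exact h1 i
            · exact h2 i
        _ ≤ ρ ^ (cycEdges p ∪ cycEdges q).card * (Om V d).card := cnt_le hd hn _ hcard
        _ ≤ _ := mul_le_mul_of_nonneg_right
            (pow_le_pow_of_le_one hρ0 hρ1 (card_image_union_le hk h.1 h.2)) (by positivity)
    · have : ∀ G, ind (IsCyc G p) * ind (IsCyc G q) = 0 := by
        intro G
        rw [← ind_and]
        exact ind_of_not fun h' => h ⟨h'.1.1, h'.2.1⟩
      simp only [this, Finset.sum_const_zero]
      positivity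
  have hp : ∀ p : Fin k → V, ∑ q : Fin k → V,
      ρ ^ (Finset.univ.image p ∪ Finset.univ.image q).card ≤
        ((k + k) * (2 * d)) ^ k * ρ ^ (Finset.univ.image p).card := by
    intro p
    have := sum_pow_card_le hρ0 (by rw [hnρ]; linarith) k k (Finset.univ.image p)
      (Finset.card_image_le.trans (by simp))
    rwa [hnρ] at this
  have h0 : ∑ p : Fin k → V, ρ ^ (Finset.univ.image p).card ≤ (k * (2 * d)) ^ k := by
    have := sum_pow_card_le hρ0 (by rw [hnρ]; linarith) k 0 (∅ : Finset V) (by simp)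
    rw [hnρ] at this
    simpa using this
  calc ∑ G ∈ Om V d, cyc k G ^ 2
      = ∑ p : Fin k → V, ∑ q : Fin k → V, ∑ G ∈ Om V d, ind (IsCyc G p) * ind (IsCyc G q) := by
        simp_rw [sq, cyc, Finset.sum_mul_sum]
        rw [Finset.sum_comm]
        refine Finset.sum_congr rfl fun p _ => ?_
        rw [Finset.sum_comm]
    _ ≤ ∑ p : Fin k → V, ∑ q : Fin k → V,
        ρ ^ (Finset.univ.image p ∪ Finset.univ.image q).card * (Om V d).card :=
        Finset.sum_le_sum fun p _ => Finset.sum_le_sum fun q _ => pair p q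
    _ = (∑ p : Fin k → V, ∑ q : Fin k → V,
        ρ ^ (Finset.univ.image p ∪ Finset.univ.image q).card) * (Om V d).card := by
        simp_rw [Finset.sum_mul]
    _ ≤ (∑ p : Fin k → V, ((k + k) * (2 * d)) ^ k * ρ ^ (Finset.univ.image p).card) *
        (Om V d).card := by gcongr with p; exact hp p
    _ = ((k + k) * (2 * d)) ^ k * (∑ p : Fin k → V, ρ ^ (Finset.univ.image p).card) *
        (Om V d).card := by rw [Finset.mul_sum]
    _ ≤ ((k + k) * (2 * d)) ^ k * (k * (2 * d)) ^ k * (Om V d).card := by gcongr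
    _ = _ := by rw [← mul_pow, pow_mul, ← mul_pow]; ring

/-- The number of common neighbours of `a` and `b`. -/
def codeg (G : SimpleGraph V) (a b : V) : ℝ := ∑ c, ind (G.Adj c a) * ind (G.Adj c b)

/-- The number of ordered triangles of `G`. -/
def tri (G : SimpleGraph V) : ℝ := ∑ a, ∑ b, ind (G.Adj a b) * codeg G a b

lemma codeg_nonneg (G : SimpleGraph V) (a b : V) : 0 ≤ codeg G a b :=
  Finset.sum_nonneg fun _ _ => mul_nonneg (ind_nonneg _) (ind_nonneg _)

lemma tri_nonneg (G : SimpleGraph V) : 0 ≤ tri G :=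
  Finset.sum_nonneg fun _ _ => Finset.sum_nonneg fun _ _ =>
    mul_nonneg (ind_nonneg _) (codeg_nonneg _ _ _)

lemma vsum_codeg_eq (G : SimpleGraph V) :
    vsum G (fun a b _ _ => codeg G a b) =
      ∑ a, ∑ b, ind (G.Adj a b) * codeg G a b * ∑ x, ∑ y, ind (Valid G a b x y) := by
  simp_rw [vsum, Finset.mul_sum]
  refine Finset.sum_congr rfl fun a _ => Finset.sum_congr rfl fun b _ =>
    Finset.sum_congr rfl fun x _ => Finset.sum_congr rfl fun y _ => ?_
  by_cases h : Valid G a b x y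
  · rw [ind_of h, ind_of h.1]; ring
  · rw [ind_of_not h]; ring

lemma Reg.vsum_codeg_le {d : ℕ} {G : SimpleGraph V} (hG : Reg d G) :
    vsum G (fun a b _ _ => codeg G a b) ≤ Fintype.card V * d * tri G := by
  rw [vsum_codeg_eq, mul_comm, tri]
  simp_rw [Finset.sum_mul]
  exact Finset.sum_le_sum fun a _ => Finset.sum_le_sum fun b _ =>
    mul_le_mul_of_nonneg_left (hG.sum_valid_le a b) (mul_nonneg (ind_nonneg _) (codeg_nonneg _ _ _))

lemma Reg.le_vsum_codeg {d : ℕ} {G : SimpleGraph V} (hG : Reg d G) :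
    (Fintype.card V * d - 2 * d * (d + 1)) * tri G ≤ vsum G (fun a b _ _ => codeg G a b) := by
  rw [vsum_codeg_eq, mul_comm, tri]
  simp_rw [Finset.sum_mul]
  refine Finset.sum_le_sum fun a _ => Finset.sum_le_sum fun b _ => ?_
  by_cases h : G.Adj a b
  · exact mul_le_mul_of_nonneg_left (hG.le_sum_valid h)
      (mul_nonneg (ind_nonneg _) (codeg_nonneg _ _ _))
  · simp [ind_of_not h]

lemma sum_reorder (F : V → V → V → V → V → ℝ) :
    ∑ a, ∑ b, ∑ x, ∑ y, ∑ c, F a b x y c = ∑ x, ∑ c, ∑ a, ∑ b, ∑ y, F a b x y c := by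
  have h1 : ∀ a b, ∑ x, ∑ y, ∑ c, F a b x y c = ∑ x, ∑ c, ∑ y, F a b x y c := fun a b =>
    Finset.sum_congr rfl fun x _ => Finset.sum_comm
  have h2 : ∀ H : V → V → V → ℝ, ∑ b, ∑ x, ∑ c, H b x c = ∑ x, ∑ c, ∑ b, H b x c := fun H => by
    rw [Finset.sum_comm]
    exact Finset.sum_congr rfl fun x _ => Finset.sum_comm
  simp_rw [h1]
  rw [Finset.sum_congr rfl fun a _ => h2 _, h2]

lemma vsum_codeg_switch_eq (G : SimpleGraph V) :
    vsum G (fun a b x y => codeg (switch G a b x y) a x) =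
      ∑ x, ∑ c, ∑ a, ∑ b, ∑ y,
        ind (Valid G a b x y ∧ G.Adj c a ∧ G.Adj c x ∧ c ≠ b ∧ c ≠ y) := by
  rw [← sum_reorder, vsum]
  refine Finset.sum_congr rfl fun a _ => Finset.sum_congr rfl fun b _ =>
    Finset.sum_congr rfl fun x _ => Finset.sum_congr rfl fun y _ => ?_
  rw [codeg, Finset.mul_sum]
  refine Finset.sum_congr rfl fun c _ => ?_
  rw [← ind_and, ← ind_and]
  congr 1
  refine propext (and_congr_right fun h => ?_)
  rw [h.switch_adj, h.switch_adj]
  obtain ⟨n1, n2, n3, n4, n5, n6⟩ := h.ne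
  simp only [Sym2.eq_iff, ne_eq]
  have l1 : G.Adj c a → c ≠ a := fun h => h.ne
  have l2 : G.Adj c x → c ≠ x := fun h => h.ne
  grind

/-- `b a c x y` is a walk of length four whose consecutive steps do not backtrack. -/
def IsPath (G : SimpleGraph V) (a b x y c : V) : Prop :=
  G.Adj c a ∧ G.Adj c x ∧ a ≠ x ∧ (G.Adj a b ∧ c ≠ b) ∧ (G.Adj x y ∧ c ≠ y)

lemma Reg.sum_adj_ne {d : ℕ} {G : SimpleGraph V} (hG : Reg d G) {a c : V} (h : G.Adj c a) :
    ∑ b, ind (G.Adj a b ∧ c ≠ b) = d - 1 := by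
  have : ∀ b, ind (G.Adj a b ∧ c ≠ b) = ind (G.Adj a b) - ind (b = c) := by
    intro b
    by_cases hb : b = c
    · subst hb; rw [ind_of rfl, ind_of h.symm, ind_of_not (by simp)]; ring
    · rw [ind_of_not hb, sub_zero]; congr 1; simp [Ne.symm hb]
  simp_rw [this, Finset.sum_sub_distrib, hG.sum_ind, sum_ind_eq_one]

lemma Reg.sum_isPath {d : ℕ} {G : SimpleGraph V} (hG : Reg d G) :
    ∑ x, ∑ c, ∑ a, ∑ b, ∑ y, ind (IsPath G a b x y c) = Fintype.card V * d * (d - 1) ^ 3 := by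
  have h1 : ∀ x c a, ∑ b, ∑ y, ind (IsPath G a b x y c) =
      ind (G.Adj x c) * (ind (G.Adj c a ∧ x ≠ a) * (d - 1) ^ 2) := by
    intro x c a
    by_cases h : G.Adj c a ∧ G.Adj c x ∧ a ≠ x
    · simp_rw [IsPath, ind_and _ (_ ∧ _), ind_of h.1, ind_of h.2.1, ind_of h.2.2]
      simp_rw [one_mul, ← Finset.mul_sum, hG.sum_adj_ne h.2.1, ← Finset.sum_mul, hG.sum_adj_ne h.1]
      rw [ind_of h.2.1.symm, ind_of ⟨h.1, h.2.2.symm⟩]; ring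
    · have h2 : ∀ b y, ind (IsPath G a b x y c) = 0 := fun b y =>
        ind_of_not fun h' => h ⟨h'.1, h'.2.1, h'.2.2.1⟩
      simp_rw [h2, Finset.sum_const_zero, ← mul_assoc, ← ind_and]
      rw [ind_of_not, zero_mul]
      rintro ⟨h3, h4, h5⟩
      exact h ⟨h4, h3.symm, h5.symm⟩
  have h2 : ∀ x c, ∑ a, ind (G.Adj x c) * (ind (G.Adj c a ∧ x ≠ a) * (d - 1) ^ 2) =
      ind (G.Adj x c) * (d - 1 : ℝ) ^ 3 := by
    intro x c
    rw [← Finset.mul_sum, ← Finset.sum_mul]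
    by_cases h : G.Adj x c
    · rw [hG.sum_adj_ne h]; ring
    · simp [ind_of_not h]
  simp_rw [h1, h2, ← Finset.sum_mul]
  rw [hG.sum_sum_ind]

lemma Reg.vsum_codeg_switch_le {d : ℕ} {G : SimpleGraph V} (hG : Reg d G) :
    vsum G (fun a b x y => codeg (switch G a b x y) a x) ≤
      Fintype.card V * d * (d - 1) ^ 3 := by
  rw [vsum_codeg_switch_eq, ← hG.sum_isPath]
  refine Finset.sum_le_sum fun x _ => Finset.sum_le_sum fun c _ => Finset.sum_le_sum fun a _ =>
    Finset.sum_le_sum fun b _ => Finset.sum_le_sum fun y _ => ind_mono ?_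
  rintro ⟨⟨h1, h2, h3, -⟩, h4, h5, h6, h7⟩
  exact ⟨h4, h5, h3, ⟨h1, h6⟩, h2, h7⟩

omit [Fintype V] in
lemma isCyc_three {G : SimpleGraph V} {a b c : V} (h1 : G.Adj a b) (h2 : G.Adj b c)
    (h3 : G.Adj c a) : IsCyc G ![a, b, c] := by
  refine ⟨?_, ?_⟩
  · have := h1.ne; have := h2.ne; have := h3.ne
    simp only [Function.Injective, Fin.forall_fin_succ]
    simp
    grind
  · intro i; fin_cases i <;> assumption

omit [Fintype V] in
lemma isCyc_four {G : SimpleGraph V} {a b c e : V} (h1 : G.Adj a b) (h2 : G.Adj b c)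
    (h3 : G.Adj c e) (h4 : G.Adj e a) (h5 : a ≠ c) (h6 : b ≠ e) : IsCyc G ![a, b, c, e] := by
  refine ⟨?_, ?_⟩
  · have := h1.ne; have := h2.ne; have := h3.ne; have := h4.ne
    simp only [Function.Injective, Fin.forall_fin_succ]
    simp
    grind
  · intro i; fin_cases i <;> assumption

omit [Fintype V] in
lemma isCyc_five {G : SimpleGraph V} {a b c e f : V} (h1 : G.Adj a b) (h2 : G.Adj b c)
    (h3 : G.Adj c e) (h4 : G.Adj e f) (h5 : G.Adj f a) (h6 : a ≠ c) (h7 : b ≠ e) (h8 : c ≠ f)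
    (h9 : e ≠ a) (h10 : f ≠ b) : IsCyc G ![a, b, c, e, f] := by
  refine ⟨?_, ?_⟩
  · have := h1.ne; have := h2.ne; have := h3.ne; have := h4.ne; have := h5.ne
    simp only [Function.Injective, Fin.forall_fin_succ]
    simp
    grind
  · intro i; fin_cases i <;> assumption

lemma sum_fin_zero (φ : (Fin 0 → V) → ℝ) : ∑ f, φ f = φ ![] := by
  rw [Fintype.sum_unique]; rfl

lemma tri_le_cyc (G : SimpleGraph V) : tri G ≤ cyc 3 G := by
  simp_rw [cyc, sum_vecCons, sum_fin_zero, tri, codeg, Finset.mul_sum, ← ind_and]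
  refine Finset.sum_le_sum fun a _ => Finset.sum_le_sum fun b _ => Finset.sum_le_sum fun c _ =>
    ind_mono ?_
  rintro ⟨h1, h2, h3⟩
  exact isCyc_three h1 h3.symm h2

/-- An upper bound for the error terms, of the order of the number of closed walks of length `5`. -/
def defect (d : ℕ) (G : SimpleGraph V) : ℝ := d ^ 2 * cyc 3 G + cyc 4 G + cyc 5 G

lemma Reg.le_vsum_codeg_switch {d : ℕ} {G : SimpleGraph V} (hG : Reg d G) :
    Fintype.card V * d * (d - 1) ^ 3 - defect d G ≤
      vsum G (fun a b x y => codeg (switch G a b x y) a x) := by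
  have pt : ∀ x c a b y, ind (IsPath G a b x y c) ≤
      ind (Valid G a b x y ∧ G.Adj c a ∧ G.Adj c x ∧ c ≠ b ∧ c ≠ y) +
        ind (G.Adj x c) * (ind (G.Adj a x) * ind (G.Adj a c)) * (ind (G.Adj a b) * ind (G.Adj x y))
        + ind (y = b) * ind (IsCyc G ![x, c, a, b]) + ind (IsCyc G ![x, c, a, b, y]) := by
    intro x c a b y
    simp_rw [← ind_and]
    by_cases h : IsPath G a b x y c
    · rw [ind_of h]
      have h' := h
      obtain ⟨h1, h2, h3, ⟨h4, h5⟩, h6, h7⟩ := h'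
      have n1 := ind_nonneg (Valid G a b x y ∧ G.Adj c a ∧ G.Adj c x ∧ c ≠ b ∧ c ≠ y)
      have n2 := ind_nonneg
        ((G.Adj x c ∧ G.Adj a x ∧ G.Adj a c) ∧ G.Adj a b ∧ G.Adj x y)
      have n3 := ind_nonneg (y = b ∧ IsCyc G ![x, c, a, b])
      have n4 := ind_nonneg (IsCyc G ![x, c, a, b, y])
      by_cases c1 : G.Adj a x
      · have := ind_of (p := (G.Adj x c ∧ G.Adj a x ∧ G.Adj a c) ∧ G.Adj a b ∧ G.Adj x y)
          ⟨⟨h2.symm, c1, h1.symm⟩, h4, h6⟩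
        linarith
      by_cases c2 : y = b
      · have := ind_of (p := y = b ∧ IsCyc G ![x, c, a, b])
          ⟨c2, isCyc_four h2.symm h1 h4 (c2 ▸ h6.symm) h3.symm h5⟩
        linarith
      by_cases c3 : G.Adj b y
      · have := ind_of (isCyc_five h2.symm h1 h4 c3 h6.symm h3.symm h5
          (fun h => c1 (h ▸ h6.symm)) (fun h => c1 (h ▸ h4)) h7.symm)
        linarith
      · have := ind_of (p := Valid G a b x y ∧ G.Adj c a ∧ G.Adj c x ∧ c ≠ b ∧ c ≠ y)
          ⟨⟨h4, h6, h3, Ne.symm c2, c1, c3⟩, h1, h2, h5, h7⟩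
        linarith
    · rw [ind_of_not h]
      have := ind_nonneg (Valid G a b x y ∧ G.Adj c a ∧ G.Adj c x ∧ c ≠ b ∧ c ≠ y)
      have := ind_nonneg
        ((G.Adj x c ∧ G.Adj a x ∧ G.Adj a c) ∧ G.Adj a b ∧ G.Adj x y)
      have := ind_nonneg (y = b ∧ IsCyc G ![x, c, a, b])
      have := ind_nonneg (IsCyc G ![x, c, a, b, y])
      linarith
  have s1 : ∑ x, ∑ c, ∑ a, ∑ b, ∑ y, ind (G.Adj x c) * (ind (G.Adj a x) * ind (G.Adj a c)) *
      (ind (G.Adj a b) * ind (G.Adj x y)) = d ^ 2 * tri G := by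
    have : ∀ a x, ∀ t : ℝ, ∑ b, ∑ y, t * (ind (G.Adj a b) * ind (G.Adj x y)) = t * d ^ 2 :=
      fun a x t => by
        simp_rw [← Finset.mul_sum, ← Finset.sum_mul, hG.sum_ind, sq]
    simp_rw [this, ← Finset.sum_mul, ← Finset.mul_sum]
    rw [mul_comm]; rfl
  have s2 : ∑ x, ∑ c, ∑ a, ∑ b, ∑ y, ind (y = b) * ind (IsCyc G ![x, c, a, b]) = cyc 4 G := by
    simp_rw [← Finset.sum_mul, sum_ind_eq_one, one_mul, cyc, sum_vecCons, sum_fin_zero]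
  have s3 : ∑ x, ∑ c, ∑ a, ∑ b, ∑ y, ind (IsCyc G ![x, c, a, b, y]) = cyc 5 G := by
    simp_rw [cyc, sum_vecCons, sum_fin_zero]
  have h := Finset.sum_le_sum fun x (_ : x ∈ Finset.univ) => Finset.sum_le_sum fun c
    (_ : c ∈ Finset.univ) => Finset.sum_le_sum fun a (_ : a ∈ Finset.univ) =>
    Finset.sum_le_sum fun b (_ : b ∈ Finset.univ) => Finset.sum_le_sum fun y
    (_ : y ∈ Finset.univ) => pt x c a b y
  simp_rw [Finset.sum_add_distrib] at h
  rw [hG.sum_isPath, s1, s2, s3, ← vsum_codeg_switch_eq] at h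
  have := mul_le_mul_of_nonneg_left (tri_le_cyc G) (sq_nonneg (d : ℝ))
  rw [defect]
  linarith

lemma ind_eq_ite (p : Prop) [Decidable p] : ind p = if p then 1 else 0 := by
  by_cases h : p <;> simp [ind, h]

lemma codeg_eq_card (G : SimpleGraph V) (a b : V) :
    codeg G a b = (Finset.univ.filter fun c => G.Adj c a ∧ G.Adj c b).card := by
  rw [← Finset.sum_boole]
  refine Finset.sum_congr rfl fun c _ => ?_
  rw [← ind_and, ind_eq_ite]

/-- The finite set of triangles of `G`. -/
def triangles (G : SimpleGraph V) : Finset (Finset V) :=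
  Finset.univ.filter fun s => G.IsNClique 3 s

lemma mem_triangles {G : SimpleGraph V} {s : Finset V} :
    s ∈ triangles G ↔ G.IsNClique 3 s := by simp [triangles]

lemma ncard_cliqueSet (G : SimpleGraph V) : (G.cliqueSet 3).ncard = (triangles G).card := by
  rw [← Set.ncard_coe_finset]
  congr 1
  ext s
  simp [mem_triangles]

/-- Every triangle gives rise to six ordered triangles. -/
lemma tri_eq (G : SimpleGraph V) : tri G = 6 * (triangles G).card := by
  have h0 : tri G = (Finset.univ.filter fun t : V × V × V =>
      G.Adj t.1 t.2.1 ∧ G.Adj t.2.2 t.1 ∧ G.Adj t.2.2 t.2.1).card := by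
    rw [← Finset.sum_boole, Fintype.sum_prod_type]
    simp_rw [Fintype.sum_prod_type, tri, codeg, Finset.mul_sum, ← ind_and, ind_eq_ite]
  have h1 := Finset.card_eq_sum_card_fiberwise (s := Finset.univ.filter fun t : V × V × V =>
      G.Adj t.1 t.2.1 ∧ G.Adj t.2.2 t.1 ∧ G.Adj t.2.2 t.2.1) (t := triangles G)
      (f := fun t => ({t.1, t.2.1, t.2.2} : Finset V)) (by
        rintro ⟨a, b, c⟩ h
        simp only [Finset.coe_filter, Finset.mem_univ, true_and, Set.mem_ofPred_eq] at h
        rw [Finset.mem_coe, mem_triangles, SimpleGraph.is3Clique_iff]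
        exact ⟨a, b, c, h.1, h.2.1.symm, h.2.2.symm, rfl⟩)
  have h2 : ∀ s ∈ triangles G, (Finset.filter (fun t : V × V × V =>
      ({t.1, t.2.1, t.2.2} : Finset V) = s) (Finset.univ.filter fun t : V × V × V =>
      G.Adj t.1 t.2.1 ∧ G.Adj t.2.2 t.1 ∧ G.Adj t.2.2 t.2.1)).card = 6 := by
    intro s hs
    rw [mem_triangles, SimpleGraph.is3Clique_iff] at hs
    obtain ⟨x, y, z, h1, h2, h3, rfl⟩ := hs
    have n1 := h1.ne
    have n2 := h2.ne
    have n3 := h3.ne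
    have : Finset.filter (fun t : V × V × V =>
        ({t.1, t.2.1, t.2.2} : Finset V) = {x, y, z}) (Finset.univ.filter fun t : V × V × V =>
        G.Adj t.1 t.2.1 ∧ G.Adj t.2.2 t.1 ∧ G.Adj t.2.2 t.2.1) =
        {(x, y, z), (x, z, y), (y, x, z), (y, z, x), (z, x, y), (z, y, x)} := by
      ext ⟨a, b, c⟩
      simp only [Finset.mem_filter, Finset.mem_univ, true_and, Finset.mem_insert,
        Finset.mem_singleton, Prod.mk.injEq]
      constructor
      · rintro ⟨⟨k1, k2, k3⟩, h⟩
        have ha : a ∈ ({x, y, z} : Finset V) := by rw [← h]; simp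
        have hb : b ∈ ({x, y, z} : Finset V) := by rw [← h]; simp
        have hc : c ∈ ({x, y, z} : Finset V) := by rw [← h]; simp
        have m1 := k1.ne
        have m2 := k2.ne
        have m3 := k3.ne
        simp only [Finset.mem_insert, Finset.mem_singleton] at ha hb hc
        grind
      · rintro (⟨rfl, rfl, rfl⟩ | ⟨rfl, rfl, rfl⟩ | ⟨rfl, rfl, rfl⟩ | ⟨rfl, rfl, rfl⟩ |
          ⟨rfl, rfl, rfl⟩ | ⟨rfl, rfl, rfl⟩) <;>
        refine ⟨by simp only [h1, h2, h3, h1.symm, h2.symm, h3.symm, and_self], ?_⟩ <;>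
        first
        | rfl
        | ext v; simp only [Finset.mem_insert, Finset.mem_singleton]; tauto
    rw [this]
    simp [n1, n2, n3, n1.symm, n2.symm, n3.symm]
  rw [h0, h1, Finset.sum_congr rfl h2]
  simp [mul_comm]

lemma card_triangles_sdiff_le {H H' : SimpleGraph V} {p q r t : V}
    (h : ∀ u v, H.Adj u v → ¬H'.Adj u v → s(u, v) = s(p, q) ∨ s(u, v) = s(r, t)) :
    ((triangles H \ triangles H').card : ℝ) ≤ codeg H p q + codeg H r t := by
  rw [codeg_eq_card, codeg_eq_card]
  have hsub : triangles H \ triangles H' ⊆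
      ((Finset.univ.filter fun c => H.Adj c p ∧ H.Adj c q).image fun c => {p, q, c}) ∪
      ((Finset.univ.filter fun c => H.Adj c r ∧ H.Adj c t).image fun c => {r, t, c}) := by
    intro s hs
    rw [Finset.mem_sdiff, mem_triangles, mem_triangles] at hs
    obtain ⟨h1, h2⟩ := hs
    obtain ⟨u, v, w, k1, k2, k3, rfl⟩ := SimpleGraph.is3Clique_iff.1 h1
    have pick : ∀ u v w : V, H.Adj u v → H.Adj u w → H.Adj v w → ¬H'.Adj u v →
        ({u, v, w} : Finset V) ∈
        ((Finset.univ.filter fun c => H.Adj c p ∧ H.Adj c q).image fun c => {p, q, c}) ∪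
        ((Finset.univ.filter fun c => H.Adj c r ∧ H.Adj c t).image fun c => {r, t, c}) := by
      intro u v w k1 k2 k3 k4
      rw [Finset.mem_union, Finset.mem_image, Finset.mem_image]
      have aux : ∀ p q : V, s(u, v) = s(p, q) →
          ∃ c ∈ Finset.univ.filter fun c => H.Adj c p ∧ H.Adj c q,
            ({p, q, c} : Finset V) = {u, v, w} := by
        intro p q e
        refine ⟨w, ?_, ?_⟩
        · rcases Sym2.eq_iff.1 e with ⟨rfl, rfl⟩ | ⟨rfl, rfl⟩ <;> simp [k2.symm, k3.symm]
        · rcases Sym2.eq_iff.1 e with ⟨rfl, rfl⟩ | ⟨rfl, rfl⟩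
          · rfl
          · rw [Finset.insert_comm]
      exact (h u v k1 k4).imp (aux p q) (aux r t)
    by_cases c1 : H'.Adj u v
    · by_cases c2 : H'.Adj u w
      · by_cases c3 : H'.Adj v w
        · exact absurd (SimpleGraph.is3Clique_iff.2 ⟨u, v, w, c1, c2, c3, rfl⟩) h2
        · have := pick v w u k3 k1.symm k2.symm c3
          rwa [show ({v, w, u} : Finset V) = {u, v, w} by ext; simp; tauto] at this
      · have := pick u w v k2 k1 k3.symm c2
        rwa [show ({u, w, v} : Finset V) = {u, v, w} by ext; simp; tauto] at this
    · exact pick u v w k1 k2 k3 c1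
  have := (Finset.card_le_card hsub).trans (Finset.card_union_le _ _)
  exact_mod_cast this.trans (add_le_add Finset.card_image_le Finset.card_image_le)

/-- Switching an edge `ab` of exactly one triangle typically changes the number of triangles
by one. -/
lemma abs_tri_sub_le {G : SimpleGraph V} {a b x y c : V} (h : Valid G a b x y)
    (ha : G.Adj c a) (hb : G.Adj c b) :
    |tri G - tri (switch G a b x y) - 6| ≤
      6 * (codeg G a b - 1 + codeg G x y + codeg G a x + codeg G b y) := by
  set H := switch G a b x y with hH
  have l1 : ((triangles G \ triangles H).card : ℝ) ≤ codeg G a b + codeg G x y := by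
    refine card_triangles_sdiff_le fun u v h1 h2 => ?_
    rw [hH, h.switch_adj] at h2
    tauto
  have l2 : ((triangles H \ triangles G).card : ℝ) ≤ codeg H a x + codeg H b y := by
    refine card_triangles_sdiff_le fun u v h1 h2 => ?_
    rw [hH, h.switch_adj] at h1
    tauto
  obtain ⟨n1, n2, n3, n4, n5, n6⟩ := h.ne
  have l3 : codeg H a x ≤ codeg G a x := by
    refine Finset.sum_le_sum fun w _ => ?_
    rw [← ind_and, ← ind_and]
    refine ind_mono fun ⟨h1, h2⟩ => ?_
    have m1 := h1.ne
    have m2 := h2.ne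
    rw [hH, h.switch_adj] at h1 h2
    simp only [Sym2.eq_iff, ne_eq] at h1 h2
    grind
  have l4 : codeg H b y ≤ codeg G b y := by
    refine Finset.sum_le_sum fun w _ => ?_
    rw [← ind_and, ← ind_and]
    refine ind_mono fun ⟨h1, h2⟩ => ?_
    have m1 := h1.ne
    have m2 := h2.ne
    rw [hH, h.switch_adj] at h1 h2
    simp only [Sym2.eq_iff, ne_eq] at h1 h2
    grind
  have l5 : (1 : ℝ) ≤ (triangles G \ triangles H).card := by
    have : 0 < (triangles G \ triangles H).card := by
      refine Finset.card_pos.2 ⟨{a, b, c}, ?_⟩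
      rw [Finset.mem_sdiff, mem_triangles, mem_triangles]
      refine ⟨SimpleGraph.is3Clique_iff.2 ⟨a, b, c, h.1, ha.symm, hb.symm, rfl⟩, fun h1 => ?_⟩
      have : H.Adj a b := h1.1 (by simp) (by simp) n1
      rw [hH, h.switch_adj] at this
      simp only [Sym2.eq_iff, ne_eq] at this
      grind
    exact_mod_cast this
  have e1 := Finset.card_sdiff_add_card_inter (triangles G) (triangles H)
  have e2 := Finset.card_sdiff_add_card_inter (triangles H) (triangles G)
  rw [Finset.inter_comm] at e2
  rw [tri_eq, tri_eq, ← e1, ← e2]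
  push_cast
  have p1 := codeg_nonneg G x y
  have p2 : (0 : ℝ) ≤ (triangles H \ triangles G).card := by positivity
  have p3 := codeg_nonneg G a x
  have p4 := codeg_nonneg G b y
  rw [abs_le]
  constructor <;> linarith

/-- The number of ordered pairs of distinct common neighbours of `a` and `b`. -/
def codegPairs (G : SimpleGraph V) (a b : V) : ℝ :=
  ∑ c, ∑ e, ind (G.Adj c a ∧ G.Adj c b ∧ G.Adj e a ∧ G.Adj e b ∧ c ≠ e)

/-- The number of pairs of distinct triangles on a common edge, with orientations. -/
def books (G : SimpleGraph V) : ℝ := ∑ a, ∑ b, ind (G.Adj a b) * codegPairs G a b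

lemma codegPairs_nonneg (G : SimpleGraph V) (a b : V) : 0 ≤ codegPairs G a b :=
  Finset.sum_nonneg fun _ _ => Finset.sum_nonneg fun _ _ => ind_nonneg _

lemma codeg_mul_sub_one (G : SimpleGraph V) (a b : V) :
    codeg G a b * (codeg G a b - 1) = codegPairs G a b := by
  have h1 : codeg G a b = ∑ c, ∑ e, ind (e = c) * ind (G.Adj c a ∧ G.Adj c b) := by
    simp_rw [← Finset.sum_mul, sum_ind_eq_one, one_mul, codeg, ind_and]
  have h2 : codeg G a b * codeg G a b =
      ∑ c, ∑ e, ind (G.Adj c a ∧ G.Adj c b) * ind (G.Adj e a ∧ G.Adj e b) := by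
    simp_rw [codeg, Finset.sum_mul_sum, ind_and]
  rw [mul_sub, mul_one, h2]
  nth_rewrite 1 [h1]
  rw [codegPairs, ← Finset.sum_sub_distrib]
  refine Finset.sum_congr rfl fun c _ => ?_
  rw [← Finset.sum_sub_distrib]
  refine Finset.sum_congr rfl fun e _ => ?_
  rw [← ind_and, ← ind_and]
  by_cases hc : e = c
  · subst hc; simp [ind]
  · simp [ind, hc, Ne.symm hc, and_assoc]

lemma Reg.sum_codeg {d : ℕ} {G : SimpleGraph V} (hG : Reg d G) (a : V) :
    ∑ x, codeg G a x = d ^ 2 := by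
  simp_rw [codeg]
  rw [Finset.sum_comm]
  simp_rw [← Finset.mul_sum, hG.sum_ind, ← Finset.sum_mul, hG.sum_ind', sq]

lemma vsum_add (G : SimpleGraph V) (F F' : V → V → V → V → ℝ) :
    vsum G (fun a b x y => F a b x y + F' a b x y) = vsum G F + vsum G F' := by
  simp_rw [vsum, mul_add, Finset.sum_add_distrib]

lemma vsum_sub (G : SimpleGraph V) (F F' : V → V → V → V → ℝ) :
    vsum G (fun a b x y => F a b x y - F' a b x y) = vsum G F - vsum G F' := by
  simp_rw [vsum, mul_sub, Finset.sum_sub_distrib]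

lemma vsum_mul_right (G : SimpleGraph V) (F : V → V → V → V → ℝ) (t : ℝ) :
    vsum G (fun a b x y => F a b x y * t) = vsum G F * t := by
  simp_rw [vsum, ← mul_assoc, Finset.sum_mul]

lemma abs_vsum_le (G : SimpleGraph V) (F F' : V → V → V → V → ℝ)
    (h : ∀ a b x y, Valid G a b x y → |F a b x y| ≤ F' a b x y) : |vsum G F| ≤ vsum G F' := by
  rw [vsum_eq, vsum_eq]
  refine (Finset.abs_sum_le_sum_abs _ _).trans (Finset.sum_le_sum fun q hq => h _ _ _ _ ?_)
  simpa using hq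

lemma vsum_le (G : SimpleGraph V) (F : V → V → V → V → ℝ) (h : ∀ a b x y, 0 ≤ F a b x y) :
    vsum G F ≤ ∑ a, ∑ b, ∑ x, ∑ y, ind (G.Adj a b) * ind (G.Adj x y) * F a b x y := by
  refine Finset.sum_le_sum fun a _ => Finset.sum_le_sum fun b _ => Finset.sum_le_sum fun x _ =>
    Finset.sum_le_sum fun y _ => mul_le_mul_of_nonneg_right ?_ (h a b x y)
  rw [← ind_and]
  exact ind_mono fun h => ⟨h.1, h.2.1⟩

lemma Reg.abs_vsum_error_le {d : ℕ} {G : SimpleGraph V} (hG : Reg d G) :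
    |vsum G fun a b x y => codeg G a b * (tri G - tri (switch G a b x y) - 6)| ≤
      6 * (Fintype.card V * d * books G + tri G ^ 2 + 2 * d ^ 3 * tri G) := by
  have b0 : |vsum G fun a b x y => codeg G a b * (tri G - tri (switch G a b x y) - 6)| ≤
      vsum G fun a b x y => (codegPairs G a b + codeg G a b * codeg G x y +
        codeg G a b * codeg G a x + codeg G a b * codeg G b y) * 6 := by
    refine abs_vsum_le _ _ _ fun a b x y h => ?_
    rw [← codeg_mul_sub_one, abs_mul, abs_of_nonneg (codeg_nonneg G a b)]
    by_cases hc : ∃ c, G.Adj c a ∧ G.Adj c b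
    · obtain ⟨c, ha, hb⟩ := hc
      have := mul_le_mul_of_nonneg_left (abs_tri_sub_le h ha hb) (codeg_nonneg G a b)
      linarith
    · have : codeg G a b = 0 := by
        refine Finset.sum_eq_zero fun c _ => ?_
        rw [← ind_and]
        exact ind_of_not fun h => hc ⟨c, h⟩
      simp [this]
  rw [vsum_mul_right, vsum_add, vsum_add, vsum_add] at b0
  have b1 : vsum G (fun a b _ _ => codegPairs G a b) ≤ Fintype.card V * d * books G := by
    refine (vsum_le G _ fun a b x y => codegPairs_nonneg _ _ _).trans (le_of_eq ?_)
    have : ∀ a b, ∑ x, ∑ y, ind (G.Adj a b) * ind (G.Adj x y) * codegPairs G a b =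
        ind (G.Adj a b) * codegPairs G a b * (Fintype.card V * d) := fun a b => by
      simp_rw [← Finset.sum_mul, ← Finset.mul_sum, hG.sum_sum_ind]; ring
    simp_rw [this, ← Finset.sum_mul]
    rw [books]; ring
  have b2 : vsum G (fun a b x y => codeg G a b * codeg G x y) ≤ tri G ^ 2 := by
    refine (vsum_le G _ fun a b x y => mul_nonneg (codeg_nonneg _ _ _)
      (codeg_nonneg _ _ _)).trans (le_of_eq ?_)
    have : ∀ a b, ∑ x, ∑ y, ind (G.Adj a b) * ind (G.Adj x y) * (codeg G a b * codeg G x y) =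
        ind (G.Adj a b) * codeg G a b * tri G := fun a b => by
      simp_rw [tri, Finset.mul_sum]
      refine Finset.sum_congr rfl fun x _ => Finset.sum_congr rfl fun y _ => by ring
    simp_rw [this, ← Finset.sum_mul]
    rw [sq]; rfl
  have b3 : vsum G (fun a b x _ => codeg G a b * codeg G a x) ≤ d ^ 3 * tri G := by
    refine (vsum_le G _ fun a b x y => mul_nonneg (codeg_nonneg _ _ _)
      (codeg_nonneg _ _ _)).trans (le_of_eq ?_)
    have h1 : ∀ a b x, ∑ y, ind (G.Adj a b) * ind (G.Adj x y) * (codeg G a b * codeg G a x) =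
        ind (G.Adj a b) * codeg G a b * (d * codeg G a x) := fun a b x => by
      rw [← Finset.sum_mul, ← Finset.mul_sum, hG.sum_ind]; ring
    simp_rw [h1, ← Finset.mul_sum, hG.sum_codeg, ← Finset.sum_mul]
    rw [tri]; ring
  have b4 : vsum G (fun a b _ y => codeg G a b * codeg G b y) ≤ d ^ 3 * tri G := by
    refine (vsum_le G _ fun a b x y => mul_nonneg (codeg_nonneg _ _ _)
      (codeg_nonneg _ _ _)).trans (le_of_eq ?_)
    have h1 : ∀ a b, ∑ x, ∑ y, ind (G.Adj a b) * ind (G.Adj x y) *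
        (codeg G a b * codeg G b y) = ind (G.Adj a b) * codeg G a b * d ^ 3 := fun a b => by
      rw [Finset.sum_comm]
      have : ∀ y, ∑ x, ind (G.Adj a b) * ind (G.Adj x y) * (codeg G a b * codeg G b y) =
          ind (G.Adj a b) * codeg G a b * d * codeg G b y := fun y => by
        rw [← Finset.sum_mul, ← Finset.mul_sum, hG.sum_ind']; ring
      simp_rw [this, ← Finset.mul_sum, hG.sum_codeg]; ring
    simp_rw [h1, ← Finset.sum_mul]
    rw [tri]; ring
  linarith

lemma sum_books_le {d : ℕ} (hd : 0 < d) (hn : 4 * d + 44 ≤ Fintype.card V) :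
    ∑ G ∈ Om V d, books G ≤ 32 * d ^ 5 / Fintype.card V * (Om V d).card := by
  set n : ℝ := (Fintype.card V : ℝ) with hn0
  have hpos : 0 < n := by rw [hn0]; exact_mod_cast (by omega)
  have key : ∀ a b c e, ∑ G ∈ Om V d, ind (G.Adj a b) *
      ind (G.Adj c a ∧ G.Adj c b ∧ G.Adj e a ∧ G.Adj e b ∧ c ≠ e) ≤
        (2 * d / n) ^ 5 * (Om V d).card := by
    intro a b c e
    by_cases h : a ≠ b ∧ c ≠ a ∧ c ≠ b ∧ e ≠ a ∧ e ≠ b ∧ c ≠ e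
    · obtain ⟨h1, h2, h3, h4, h5, h6⟩ := h
      set S : Finset (Sym2 V) := {s(a, b), s(c, a), s(c, b), s(e, a), s(e, b)} with hS
      have hcard : S.card = 5 := by
        rw [hS]
        repeat rw [Finset.card_insert_of_notMem]
        · simp
        all_goals
          simp only [Finset.mem_insert, Finset.mem_singleton, Sym2.eq_iff]
          grind
      rw [← hcard]
      refine le_trans (Finset.sum_le_sum fun G _ => ?_) (cnt_le hd hn S (by omega))
      rw [← ind_and]
      refine ind_mono ?_
      rintro ⟨k1, k2, k3, k4, k5, -⟩ f hf
      simp only [hS, Finset.mem_insert, Finset.mem_singleton] at hf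
      rcases hf with rfl | rfl | rfl | rfl | rfl <;> assumption
    · have : ∀ G : SimpleGraph V, ind (G.Adj a b) *
          ind (G.Adj c a ∧ G.Adj c b ∧ G.Adj e a ∧ G.Adj e b ∧ c ≠ e) = 0 := fun G => by
        rw [← ind_and]
        exact ind_of_not fun ⟨h1, h2, h3, h4, h5, h6⟩ =>
          h ⟨h1.ne, h2.ne, h3.ne, h4.ne, h5.ne, h6⟩
      simp_rw [this, Finset.sum_const_zero]
      positivity
  calc ∑ G ∈ Om V d, books G
      = ∑ a, ∑ b, ∑ c, ∑ e, ∑ G ∈ Om V d, ind (G.Adj a b) *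
          ind (G.Adj c a ∧ G.Adj c b ∧ G.Adj e a ∧ G.Adj e b ∧ c ≠ e) := by
        simp_rw [books, codegPairs, Finset.mul_sum]
        rw [Finset.sum_comm]; refine Finset.sum_congr rfl fun a _ => ?_
        rw [Finset.sum_comm]; refine Finset.sum_congr rfl fun b _ => ?_
        rw [Finset.sum_comm]; refine Finset.sum_congr rfl fun c _ => ?_
        rw [Finset.sum_comm]
    _ ≤ ∑ a : V, ∑ b : V, ∑ c : V, ∑ e : V, (2 * d / n) ^ 5 * (Om V d).card :=
        Finset.sum_le_sum fun a _ => Finset.sum_le_sum fun b _ => Finset.sum_le_sum fun c _ =>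
          Finset.sum_le_sum fun e _ => key a b c e
    _ = _ := by
        simp only [Finset.sum_const, Finset.card_univ, nsmul_eq_mul, ← hn0]
        field_simp
        ring

lemma mul_abs_of_pos {a : ℝ} (ha : 0 < a) (b : ℝ) : a * |b| = |a * b| := by
  rw [abs_mul, abs_of_pos ha]

/-- A concentration estimate for a random variable `T` driven by approximate detailed balance
relations: `A` is close to `M * T`, `B` is close to `M * lam`, and `A`, `B` have equal means. -/
lemma moment_estimate {ι : Type*} (s : Finset ι) (T A B E U : ι → ℝ) {M lam δ : ℝ}
    (hM : 0 < M) (hδ : 0 < δ) (hs : 0 < s.card)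
    (hA1 : ∀ i ∈ s, A i ≤ M * T i) (hA2 : ∀ i ∈ s, M * T i - 4 * U i ≤ A i)
    (hB1 : ∀ i ∈ s, B i ≤ M * lam) (hB2 : ∀ i ∈ s, M * lam - U i ≤ B i)
    (hAB : ∑ i ∈ s, A i = ∑ i ∈ s, B i)
    (hTAB : ∑ i ∈ s, T i * A i - ∑ i ∈ s, T i * B i = 6 * ∑ i ∈ s, A i + ∑ i ∈ s, E i) :
    M * |∑ i ∈ s, T i - s.card * lam| ≤ 4 * ∑ i ∈ s, U i ∧
    M * |∑ i ∈ s, (T i - (∑ i ∈ s, T i) / s.card) ^ 2 - 6 * ∑ i ∈ s, T i| ≤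
      M * δ * ∑ i ∈ s, (T i - (∑ i ∈ s, T i) / s.card) ^ 2 + 24 * ∑ i ∈ s, U i +
      |∑ i ∈ s, E i| + 16 / (M * δ) * ∑ i ∈ s, U i ^ 2 := by
  have hs' : (0 : ℝ) < s.card := by exact_mod_cast hs
  set m : ℝ := (∑ i ∈ s, T i) / s.card with hm
  have e1 : ∑ i ∈ s, (M * T i - A i) = M * ∑ i ∈ s, T i - ∑ i ∈ s, A i := by
    rw [Finset.sum_sub_distrib, Finset.mul_sum]
  have e2 : ∑ i ∈ s, (M * lam - B i) = s.card * (M * lam) - ∑ i ∈ s, B i := by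
    rw [Finset.sum_sub_distrib]; simp
  have a1 : 0 ≤ ∑ i ∈ s, (M * T i - A i) :=
    Finset.sum_nonneg fun i hi => by linarith [hA1 i hi]
  have a2 : ∑ i ∈ s, (M * T i - A i) ≤ 4 * ∑ i ∈ s, U i := by
    rw [Finset.mul_sum]
    exact Finset.sum_le_sum fun i hi => by linarith [hA2 i hi]
  have b1 : 0 ≤ ∑ i ∈ s, (M * lam - B i) :=
    Finset.sum_nonneg fun i hi => by linarith [hB1 i hi]
  have b2 : ∑ i ∈ s, (M * lam - B i) ≤ ∑ i ∈ s, U i :=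
    Finset.sum_le_sum fun i hi => by linarith [hB2 i hi]
  constructor
  · rw [mul_abs_of_pos hM, abs_le]
    constructor <;> linarith
  · have c0 : ∑ i ∈ s, (T i - m) = 0 := by
      rw [Finset.sum_sub_distrib, Finset.sum_const, nsmul_eq_mul, hm]
      field_simp
      ring
    have c1 : M * ∑ i ∈ s, (T i - m) ^ 2 = ∑ i ∈ s, T i * A i - ∑ i ∈ s, T i * B i -
        m * (∑ i ∈ s, A i - ∑ i ∈ s, B i) + ∑ i ∈ s, (T i - m) *
          ((M * T i - A i) - (M * lam - B i)) + M * (lam - m) * ∑ i ∈ s, (T i - m) := by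
      simp only [Finset.mul_sum, ← Finset.sum_sub_distrib, ← Finset.sum_add_distrib]
      exact Finset.sum_congr rfl fun i _ => by ring
    have c2 : |∑ i ∈ s, (T i - m) * ((M * T i - A i) - (M * lam - B i))| ≤
        M * δ * ∑ i ∈ s, (T i - m) ^ 2 + 16 / (M * δ) * ∑ i ∈ s, U i ^ 2 := by
      refine (Finset.abs_sum_le_sum_abs _ _).trans ?_
      rw [Finset.mul_sum, Finset.mul_sum, ← Finset.sum_add_distrib]
      refine Finset.sum_le_sum fun i hi => ?_
      have hU : |(M * T i - A i) - (M * lam - B i)| ≤ 4 * U i := by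
        rw [abs_le]
        constructor <;> linarith [hA1 i hi, hA2 i hi, hB1 i hi, hB2 i hi]
      have hMδ : 0 < M * δ := by positivity
      rw [abs_mul, ← sq_abs (T i - m)]
      refine (mul_le_mul_of_nonneg_left hU (abs_nonneg _)).trans ?_
      have : 0 ≤ (M * δ * |T i - m| - 2 * U i) ^ 2 / (M * δ) := by positivity
      have e : (M * δ * |T i - m| - 2 * U i) ^ 2 / (M * δ) =
        M * δ * |T i - m| ^ 2 - 4 * (|T i - m| * U i) + 4 / (M * δ) * U i ^ 2 := by
        field_simp
        ring
      have e' : 4 / (M * δ) * U i ^ 2 ≤ 16 / (M * δ) * U i ^ 2 := by gcongr; norm_num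
      linarith
    rw [mul_abs_of_pos hM, mul_sub, c1, c0, hAB, hTAB]
    have c3 := neg_abs_le (∑ i ∈ s, E i)
    have c4 := le_abs_self (∑ i ∈ s, E i)
    rw [abs_le] at c2 ⊢
    constructor <;> linarith

lemma sum_le_of_sum_sq_le {ι : Type*} (s : Finset ι) (f : ι → ℝ) {c : ℝ} (hc : 0 ≤ c)
    (h : ∑ i ∈ s, f i ^ 2 ≤ c ^ 2 * s.card) : ∑ i ∈ s, f i ≤ c * s.card := by
  refine le_of_sq_le_sq ?_ (by positivity)
  refine sq_sum_le_card_mul_sum_sq.trans ?_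
  calc (s.card : ℝ) * ∑ i ∈ s, f i ^ 2 ≤ s.card * (c ^ 2 * s.card) := by gcongr
    _ = _ := by ring

lemma sum_mul_vsum_switch (d : ℕ) (φ : SimpleGraph V → ℝ) :
    ∑ G ∈ Om V d, φ G * vsum G (fun a b x y => codeg (switch G a b x y) a x) =
      ∑ G ∈ Om V d, vsum G fun a b x y => codeg G a b * φ (switch G a b x y) := by
  have h := sum_vsum_switch (V := V) d
    (fun G a b x y => codeg (switch G a b x y) a x * φ G)
  simp_rw [vsum_mul_right] at h
  simp_rw [mul_comm (φ _), h]
  refine Finset.sum_congr rfl fun G _ => ?_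
  rw [vsum_eq, vsum_eq]
  refine Finset.sum_congr rfl fun q hq => ?_
  rw [switch_switch]

lemma sum_defect_sq_le {d : ℕ} (hd : 0 < d) (hn : 4 * d + 44 ≤ Fintype.card V) :
    ∑ G ∈ Om V d, defect d G ^ 2 ≤ (10 ^ 6 * d ^ 5) ^ 2 * (Om V d).card := by
  have h3 := sum_cyc_sq_le hd hn 3 (by decide) (by norm_num)
  have h4 := sum_cyc_sq_le hd hn 4 (by decide) (by norm_num)
  have h5 := sum_cyc_sq_le hd hn 5 (by decide) (by norm_num)
  have hd1 : (1 : ℝ) ≤ d := by exact_mod_cast hd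
  have h8 : (d : ℝ) ^ 8 ≤ d ^ 10 := pow_le_pow_right₀ hd1 (by norm_num)
  have hN : (0 : ℝ) ≤ (Om V d).card := by positivity
  have : ∑ G ∈ Om V d, defect d G ^ 2 ≤ 3 * (d ^ 4 * ∑ G ∈ Om V d, cyc 3 G ^ 2 +
      ∑ G ∈ Om V d, cyc 4 G ^ 2 + ∑ G ∈ Om V d, cyc 5 G ^ 2) := by
    simp only [Finset.mul_sum, ← Finset.sum_add_distrib]
    refine Finset.sum_le_sum fun G _ => ?_
    rw [defect]
    nlinarith [sq_nonneg (d ^ 2 * cyc 3 G - cyc 4 G), sq_nonneg (d ^ 2 * cyc 3 G - cyc 5 G),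
      sq_nonneg (cyc 4 G - cyc 5 G)]
  have k3 := mul_le_mul_of_nonneg_left h3 (show (0 : ℝ) ≤ d ^ 4 by positivity)
  have k8 := mul_le_mul_of_nonneg_right h8 hN
  have k10 : (0 : ℝ) ≤ d ^ 10 * (Om V d).card := by positivity
  norm_num at k3 h4 h5
  ring_nf at *
  linarith

lemma sum_tri_sq_le {d : ℕ} (hd : 0 < d) (hn : 4 * d + 44 ≤ Fintype.card V) :
    ∑ G ∈ Om V d, tri G ^ 2 ≤ (10 ^ 3 * d ^ 3) ^ 2 * (Om V d).card := by
  have h3 := sum_cyc_sq_le hd hn 3 (by decide) (by norm_num)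
  have : ∑ G ∈ Om V d, tri G ^ 2 ≤ ∑ G ∈ Om V d, cyc 3 G ^ 2 :=
    Finset.sum_le_sum fun G _ => pow_le_pow_left₀ (tri_nonneg G) (tri_le_cyc G) 2
  have k : (0 : ℝ) ≤ d ^ 6 * (Om V d).card := by positivity
  norm_num at h3
  ring_nf at *
  linarith

/-- First and second moment of the number of ordered triangles in a random regular graph. -/
lemma tri_moments {d : ℕ} (hd : 0 < d) (hn : 4 * d + 44 ≤ Fintype.card V)
    (hOm : 0 < (Om V d).card) {m v δ : ℝ} (hδ : 0 < δ)
    (hm : m = (∑ G ∈ Om V d, tri G) / (Om V d).card)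
    (hv : v = (∑ G ∈ Om V d, (tri G - m) ^ 2) / (Om V d).card) :
    |m - (d - 1) ^ 3| ≤ 10 ^ 7 * (d ^ 4 / Fintype.card V : ℝ) ∧
    |v - 6 * m| ≤ δ * v + 10 ^ 14 * (d ^ 5 / Fintype.card V +
      d ^ 8 / (δ * Fintype.card V ^ 2) : ℝ) := by
  have hN : (0 : ℝ) < (Om V d).card := by exact_mod_cast hOm
  have hn0 : (0 : ℝ) < Fintype.card V := by exact_mod_cast (by omega : 0 < Fintype.card V)
  have hd1 : (1 : ℝ) ≤ d := by exact_mod_cast hd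
  have hM : (0 : ℝ) < Fintype.card V * d := by positivity
  have hU2 := sum_defect_sq_le hd hn
  have hU1 := sum_le_of_sum_sq_le _ _ (by positivity) hU2
  have hT2 := sum_tri_sq_le hd hn
  have hT1 := sum_le_of_sum_sq_le _ _ (by positivity) hT2
  have hE : |∑ G ∈ Om V d, vsum G
      fun a b x y => codeg G a b * (tri G - tri (switch G a b x y) - 6)| ≤
      10 ^ 7 * d ^ 6 * (Om V d).card := by
    have hb := mul_le_mul_of_nonneg_left (sum_books_le hd hn) hM.le
    have hb' : (Fintype.card V * d : ℝ) * (32 * d ^ 5 / Fintype.card V * (Om V d).card) =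
        32 * d ^ 6 * (Om V d).card := by
      generalize ((Om V d).card : ℝ) = N
      field_simp
    have ht := mul_le_mul_of_nonneg_left hT1 (show (0 : ℝ) ≤ 2 * d ^ 3 by positivity)
    have k : (0 : ℝ) ≤ d ^ 6 * (Om V d).card := by positivity
    calc _ ≤ ∑ G ∈ Om V d, 6 * (Fintype.card V * d * books G + tri G ^ 2 +
          2 * d ^ 3 * tri G) := (Finset.abs_sum_le_sum_abs _ _).trans
            (Finset.sum_le_sum fun G hG => (mem_Om.1 hG).abs_vsum_error_le)
      _ = 6 * (Fintype.card V * d * ∑ G ∈ Om V d, books G + ∑ G ∈ Om V d, tri G ^ 2 +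
          2 * d ^ 3 * ∑ G ∈ Om V d, tri G) := by
        simp only [Finset.mul_sum, ← Finset.sum_add_distrib]
      _ ≤ _ := by rw [hb'] at hb; ring_nf at *; linarith
  have hAB := sum_mul_vsum_switch (V := V) d fun _ => 1
  simp only [one_mul, mul_one] at hAB
  obtain ⟨r1, r2⟩ := moment_estimate (Om V d) tri (fun G => vsum G fun a b _ _ => codeg G a b)
    (fun G => vsum G fun a b x y => codeg (switch G a b x y) a x)
    (fun G => vsum G fun a b x y => codeg G a b * (tri G - tri (switch G a b x y) - 6))
    (defect d) (M := Fintype.card V * d) (lam := (d - 1) ^ 3) hM hδ hOm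
    (fun G hG => (mem_Om.1 hG).vsum_codeg_le)
    (fun G hG => by
      have h1 := (mem_Om.1 hG).le_vsum_codeg
      have h2 : (d : ℝ) ^ 2 * tri G ≤ defect d G := by
        have := mul_le_mul_of_nonneg_left (tri_le_cyc G) (show (0 : ℝ) ≤ d ^ 2 by positivity)
        have := cyc_nonneg 4 G
        have := cyc_nonneg 5 G
        rw [defect]
        linarith
      have h3 : (d : ℝ) * tri G ≤ d ^ 2 * tri G :=
        mul_le_mul_of_nonneg_right (by nlinarith) (tri_nonneg G)
      nlinarith)
    (fun G hG => (mem_Om.1 hG).vsum_codeg_switch_le)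
    (fun G hG => (mem_Om.1 hG).le_vsum_codeg_switch)
    hAB.symm
    (by
      rw [sum_mul_vsum_switch, Finset.mul_sum, ← Finset.sum_sub_distrib,
        ← Finset.sum_add_distrib]
      refine Finset.sum_congr rfl fun G _ => ?_
      rw [mul_comm (tri G), ← vsum_mul_right, ← vsum_sub, mul_comm 6, ← vsum_mul_right, ← vsum_add]
      congr 1
      ext a b x y
      ring)
  have m1 : ∑ G ∈ Om V d, tri G = m * (Om V d).card := by rw [hm, div_mul_cancel₀ _ hN.ne']
  rw [← hm] at r2
  have v1 : ∑ G ∈ Om V d, (tri G - m) ^ 2 = v * (Om V d).card := by rw [hv, div_mul_cancel₀ _ hN.ne']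
  rw [v1, m1] at r2
  rw [m1] at r1
  clear hm hv m1 v1 hT1 hT2 hAB hOm
  generalize ((Om V d).card : ℝ) = N at *
  constructor
  · have q : |m * N - N * (d - 1) ^ 3| =
        |m - (d - 1) ^ 3| * N := by
      rw [mul_comm |_|, mul_abs_of_pos hN]; ring_nf
    rw [q] at r1
    have := r1.trans (mul_le_mul_of_nonneg_left hU1 (by norm_num))
    have h2 : |m - (d - 1) ^ 3| ≤ 4 * 10 ^ 6 * (d ^ 4 / Fintype.card V : ℝ) := by
      rw [← mul_le_mul_iff_left₀ (mul_pos hM hN)]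
      calc _ = _ := by ring
        _ ≤ _ := this
        _ = _ := by field_simp
    refine h2.trans ?_
    gcongr
    norm_num
  · have q : |v * N - 6 * (m * N)| =
        |v - 6 * m| * N := by
      rw [mul_comm |_|, mul_abs_of_pos hN]; ring_nf
    rw [q] at r2
    have h2 : |v - 6 * m| ≤ δ * v + 24 * 10 ^ 6 * (d ^ 4 / Fintype.card V) +
        10 ^ 7 * (d ^ 5 / Fintype.card V) +
        16 * 10 ^ 12 * (d ^ 8 / (δ * Fintype.card V ^ 2)) := by
      rw [← mul_le_mul_iff_left₀ (mul_pos hM hN)]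
      calc _ = _ := by ring
        _ ≤ _ := r2
        _ ≤ Fintype.card V * d * δ * (v * N) + 24 * (10 ^ 6 * d ^ 5 * N) +
          10 ^ 7 * d ^ 6 * N + 16 / (Fintype.card V * d * δ) *
            ((10 ^ 6 * d ^ 5) ^ 2 * N) := by gcongr
        _ = _ := by field_simp
    have h4 : (d : ℝ) ^ 4 / Fintype.card V ≤ d ^ 5 / Fintype.card V := by
      gcongr
      norm_num
    have h5 : (0 : ℝ) ≤ d ^ 5 / Fintype.card V := by positivity
    have h6 : (0 : ℝ) ≤ d ^ 8 / (δ * Fintype.card V ^ 2) := by positivity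
    linarith

/-- A set of residues that is closed under negation and omits zero gives a regular graph. -/
lemma exists_reg_of_residues {n : ℕ} [NeZero n] (S : Finset (Fin n)) (h0 : 0 ∉ S)
    (hneg : ∀ v ∈ S, -v ∈ S) : ∃ G : SimpleGraph (Fin n), Reg S.card G := by
  refine ⟨{ Adj := fun u v => u - v ∈ S, symm := ⟨fun u v h => ?_⟩, loopless := ⟨fun u h => ?_⟩ },
    fun u => ?_⟩
  · rw [← neg_sub]; exact hneg _ h
  · rw [sub_self] at h; exact h0 h
  · rw [← Set.ncard_coe_finset S]
    refine Set.ncard_congr (fun v _ => u - v) (fun v hv => hv)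
      (fun v w _ _ h => sub_right_injective h) fun v hv => ⟨u - v, ?_, sub_sub_cancel u v⟩
    change u - (u - v) ∈ S
    rwa [sub_sub_cancel]

lemma Om_nonempty {n d : ℕ} (hdn : d < n) (he : Even (d * n)) : (Om (Fin n) d).Nonempty := by
  have : NeZero n := ⟨by omega⟩
  let S : Finset (Fin n) := Finset.univ.filter fun v =>
    (1 ≤ v.val ∧ v.val ≤ d / 2) ∨ n - d / 2 ≤ v.val ∨ (d % 2 = 1 ∧ 2 * v.val = n)
  have hmap : S.map Fin.valEmbedding = (Finset.Icc 1 (d / 2) ∪ Finset.Ico (n - d / 2) n) ∪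
      if d % 2 = 1 then {n / 2} else ∅ := by
    have hd2 : d % 2 = 1 → 2 * (n / 2) = n := fun h => by
      rcases Nat.even_mul.1 he with h' | h'
      · rw [Nat.even_iff] at h'; omega
      · rw [Nat.even_iff] at h'; omega
    ext w
    simp only [S, Finset.mem_map, Finset.mem_filter, Finset.mem_univ, true_and,
      Fin.valEmbedding_apply, Finset.mem_union, Finset.mem_Icc, Finset.mem_Ico]
    constructor
    · rintro ⟨v, hv, rfl⟩
      have := v.2
      split_ifs with h
      · rw [Finset.mem_singleton]; omega
      · simp only [Finset.notMem_empty, or_false]; omega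
    · intro hw
      have hwn : w < n := by
        split_ifs at hw with h
        · rw [Finset.mem_singleton] at hw; omega
        · simp only [Finset.notMem_empty, or_false] at hw; omega
      refine ⟨⟨w, hwn⟩, ?_, rfl⟩
      split_ifs at hw with h
      · have := hd2 h; rw [Finset.mem_singleton] at hw; simp only; omega
      · simp only [Finset.notMem_empty, or_false] at hw; simp only; omega
  have hcard : S.card = d := by
    rw [← Finset.card_map Fin.valEmbedding, hmap, Finset.card_union_of_disjoint,
      Finset.card_union_of_disjoint, Nat.card_Icc, Nat.card_Ico]
    · split_ifs with h
      · rw [Finset.card_singleton]; omega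
      · rw [Finset.card_empty]; omega
    · rw [Finset.disjoint_left]
      intro w hw hw'
      rw [Finset.mem_Icc] at hw
      rw [Finset.mem_Ico] at hw'
      omega
    · rw [Finset.disjoint_left]
      intro w hw
      rw [Finset.mem_union, Finset.mem_Icc, Finset.mem_Ico] at hw
      split_ifs with h
      · rw [Finset.mem_singleton]; omega
      · exact Finset.notMem_empty w
  obtain ⟨G, hG⟩ := exists_reg_of_residues S (by simp [S]; omega) (fun v hv => by
    simp only [S, Finset.mem_filter, Finset.mem_univ, true_and] at hv ⊢
    have := v.2
    have h0 : v.val ≠ 0 := by omega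
    rw [Fin.val_neg', Nat.mod_eq_of_lt (show n - v.val < n by omega)]
    omega)
  exact ⟨G, mem_Om.2 (hcard ▸ hG)⟩

lemma expect_eq {n : ℕ} (d : ℕ) (X : SimpleGraph (Fin n) → ℝ) :
    expect (fun G => ∀ i, deg G i = d) X =
      (∑ G ∈ Om (Fin n) d, X G) / (Om (Fin n) d).card := by
  have h : {G : SimpleGraph (Fin n) | ∀ i, deg G i = d} = (Om (Fin n) d : Set _) := by
    ext G
    rw [Finset.mem_coe, mem_Om]
    rfl
  rw [expect, h, finsum_mem_coe_finset]
  congr 2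
  rw [← Set.ncard_coe_finset, ← h]
  rfl

/-- The first two moments of the number of triangles, in terms of the mean `m` and the variance
`v` of the number of ordered triangles. -/
lemma triCount_moments {n d : ℕ} (hd : 0 < d) (hn : 4 * d + 44 ≤ n) (he : Even (d * n)) :
    ∃ m v : ℝ,
      expect (fun G : SimpleGraph (Fin n) => ∀ i, deg G i = d) (fun G => (triCount G : ℝ)) =
        m / 6 ∧
      expect (fun G : SimpleGraph (Fin n) => ∀ i, deg G i = d)
        (fun G => ((triCount G : ℝ) - m / 6) ^ 2) = v / 36 ∧
      0 ≤ v ∧ |m - (d - 1) ^ 3| ≤ 10 ^ 7 * (d ^ 4 / n : ℝ) ∧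
      ∀ δ : ℝ, 0 < δ → |v - 6 * m| ≤ δ * v + 10 ^ 14 * (d ^ 5 / n + d ^ 8 / (δ * n ^ 2) : ℝ) := by
  have hT : ∀ G : SimpleGraph (Fin n), (triCount G : ℝ) = tri G / 6 := fun G => by
    rw [triCount, ncard_cliqueSet, tri_eq]; ring
  have hOm := (Om_nonempty (show d < n by omega) he).card_pos
  have hn' : 4 * d + 44 ≤ Fintype.card (Fin n) := by rwa [Fintype.card_fin]
  refine ⟨(∑ G ∈ Om (Fin n) d, tri G) / (Om (Fin n) d).card, (∑ G ∈ Om (Fin n) d,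
    (tri G - (∑ G ∈ Om (Fin n) d, tri G) / (Om (Fin n) d).card) ^ 2) / (Om (Fin n) d).card,
    ?_, ?_, ?_, ?_⟩
  · simp_rw [expect_eq, hT, ← Finset.sum_div]
    rw [div_right_comm]
  · simp_rw [expect_eq, hT, ← sub_div, div_pow, ← Finset.sum_div]
    rw [div_right_comm]
    norm_num
  · positivity
  · have h := fun (δ : ℝ) (hδ : 0 < δ) => tri_moments hd hn' hOm hδ rfl rfl
    rw [Fintype.card_fin] at h
    exact ⟨(h 1 one_pos).1, fun δ hδ => (h δ hδ).2⟩

/-- Quantitative form of the asymptotics of the first two moments of the number of triangles. -/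
lemma triCount_ratio_estimates {n d : ℕ} (hd : 100 ≤ d) (hn0 : 0 < n) (he : Even (d * n)) {s μ : ℝ}
    (hs : s = √((d : ℝ) ^ 5 / (n : ℝ) ^ 2)) (hs1 : s ≤ 1 / 10 ^ 9)
    (hμ : μ = expect (fun G : SimpleGraph (Fin n) => ∀ i, deg G i = d)
      (fun G => (triCount G : ℝ))) :
    |expect (fun G : SimpleGraph (Fin n) => ∀ i, deg G i = d)
        (fun G => ((triCount G : ℝ) - μ) ^ 2) / μ - 1| ≤
      2 * s * (1 + 10 ^ 15 * s) + 10 ^ 15 * s ∧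
    |μ / (((d : ℝ) - 1) ^ 3 / 6) - 1| ≤ 10 ^ 15 * s := by
  have hD : (100 : ℝ) ≤ d := by exact_mod_cast hd
  have hx : (0 : ℝ) < n := by exact_mod_cast hn0
  have hs0 : 0 < s := by rw [hs]; positivity
  have hs2 : s ^ 2 = d ^ 5 / n ^ 2 := by rw [hs, Real.sq_sqrt (by positivity)]
  have hsn : (s * n) ^ 2 = (d : ℝ) ^ 5 := by rw [mul_pow, hs2]; field_simp
  have hdn2 : (d : ℝ) ^ 2 ≤ s * n := by
    refine le_of_sq_le_sq ?_ (by positivity)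
    rw [hsn, ← pow_mul]
    exact pow_le_pow_right₀ (by linarith) (by norm_num)
  have hdn1 : (d : ℝ) ≤ s * n := by nlinarith
  have hbig : 4 * d + 44 ≤ n := by
    have h : (4 * d + 44 : ℝ) ≤ n := by
      have := mul_le_mul_of_nonneg_right hs1 hx.le
      linarith
    exact_mod_cast h
  obtain ⟨m, v, hm, hv, hv0, h1, h2⟩ := triCount_moments (by omega) hbig he
  rw [hm] at hμ
  rw [hμ, hv]
  have hlam : (d : ℝ) ^ 3 / 8 ≤ (d - 1) ^ 3 := by
    rw [show (d : ℝ) ^ 3 / 8 = (d / 2) ^ 3 by ring]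
    exact pow_le_pow_left₀ (by positivity) (by linarith) 3
  set lam : ℝ := ((d : ℝ) - 1) ^ 3 with hlam0
  have hd3 : (0 : ℝ) < d ^ 3 := by positivity
  have hlampos : 0 < lam := by linarith
  have k1 : |m - lam| ≤ 8 * 10 ^ 7 * s * lam := by
    have : (d : ℝ) ^ 4 / n ≤ s * d ^ 3 := by
      rw [div_le_iff₀ hx]
      nlinarith
    have := mul_le_mul_of_nonneg_left hlam hs0.le
    linarith
  have hmlow : (d : ℝ) ^ 3 / 16 ≤ m := by
    have := (abs_le.1 k1).1
    nlinarith
  have hmpos : 0 < m := by linarith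
  constructor
  · have k2 := h2 s hs0
    have e1 : (d : ℝ) ^ 5 / n ≤ s * d ^ 3 := by
      rw [div_le_iff₀ hx]
      nlinarith
    have e2 : (d : ℝ) ^ 8 / (s * n ^ 2) = s * d ^ 3 := by
      rw [div_eq_iff (by positivity)]
      linear_combination -(d : ℝ) ^ 3 * hsn
    have e3 : s * (d : ℝ) ^ 3 ≤ s * (16 * m) := by gcongr; linarith
    have hr : v / 36 / (m / 6) = v / (6 * m) := by field_simp; norm_num
    rw [hr]
    set r := v / (6 * m) with hr0
    have hvr : v = r * (6 * m) := by rw [hr0]; field_simp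
    have k3 : |r - 1| ≤ s * r + 10 ^ 15 * s := by
      rw [← mul_le_mul_iff_right₀ (show 0 < 6 * m by positivity), mul_abs_of_pos (by positivity),
        mul_sub, mul_one, mul_comm, ← hvr]
      refine k2.trans ?_
      rw [e2, hvr]
      nlinarith [mul_pos hs0 hmpos]
    have k4 := (abs_le.1 k3).2
    have hr1 : r ≤ 2 * (1 + 10 ^ 15 * s) := by
      have : 0 ≤ r := by positivity
      nlinarith
    have := mul_le_mul_of_nonneg_left hr1 hs0.le
    linarith
  · rw [div_div_div_cancel_right₀ (by norm_num), div_sub_one hlampos.ne', abs_div,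
      abs_of_pos hlampos, div_le_iff₀ hlampos]
    refine k1.trans ?_
    gcongr
    norm_num

end RegularTriangles

/-- For `d → ∞` with `d⁵/n² → 0`, the variance of the number of triangles of the random
`d`-regular graph is asymptotic to its mean, which is asymptotic to `(d-1)³/6`. -/
theorem stmt10 (d : ℕ → ℕ) (hd : ∀ n, 0 < d n) (heven : ∀ n, Even (d n * n))
    (hinf : Tendsto (fun n => (d n : ℝ)) atTop atTop)
    (hsmall : Tendsto (fun n => (d n : ℝ) ^ 5 / (n : ℝ) ^ 2) atTop (nhds 0))
    (μ : ℕ → ℝ)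
    (hμ : ∀ n, μ n = expect (fun G : SimpleGraph (Fin n) => ∀ i, deg G i = d n)
      (fun G => (triCount G : ℝ))) :
    Tendsto (fun n => expect (fun G : SimpleGraph (Fin n) => ∀ i, deg G i = d n)
        (fun G => ((triCount G : ℝ) - μ n) ^ 2) / μ n) atTop (nhds 1) ∧
    Tendsto (fun n => μ n / (((d n : ℝ) - 1) ^ 3 / 6)) atTop (nhds 1) := by
  have hs : Tendsto (fun n => √((d n : ℝ) ^ 5 / (n : ℝ) ^ 2)) atTop (nhds 0) := by
    simpa using hsmall.sqrt
  have hev : ∀ᶠ n in atTop, 100 ≤ d n ∧ 0 < n ∧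
      √((d n : ℝ) ^ 5 / (n : ℝ) ^ 2) ≤ 1 / 10 ^ 9 := by
    filter_upwards [hinf.eventually_ge_atTop 100, eventually_gt_atTop 0,
      hs.eventually_le_const (by norm_num : (0 : ℝ) < 1 / 10 ^ 9)] with n h1 h2 h3
    exact ⟨by exact_mod_cast h1, h2, h3⟩
  constructor
  · rw [tendsto_iff_norm_sub_tendsto_zero]
    have hlim := ((hs.const_mul 2).mul ((hs.const_mul (10 ^ 15)).const_add 1)).add
      (hs.const_mul (10 ^ 15))
    simp only [mul_zero, zero_mul, add_zero] at hlim
    refine squeeze_zero' (Eventually.of_forall fun n => norm_nonneg _) ?_ hlim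
    filter_upwards [hev] with n ⟨h1, h2, h3⟩
    exact (RegularTriangles.triCount_ratio_estimates h1 h2 (heven n) rfl h3 (hμ n)).1
  · rw [tendsto_iff_norm_sub_tendsto_zero]
    have hlim := hs.const_mul (10 ^ 15)
    rw [mul_zero] at hlim
    refine squeeze_zero' (Eventually.of_forall fun n => norm_nonneg _) ?_ hlim
    filter_upwards [hev] with n ⟨h1, h2, h3⟩
    exact (RegularTriangles.triCount_ratio_estimates h1 h2 (heven n) rfl h3 (hμ n)).2
end
end

section
/- For all constants K ≥ 1 and c > 0 there exist constants C > 0 and δ > 0 with the following property. Let 𝐝 = (d_1,…,d_n) be a degree sequence with even sum M and maximum entry Δ satisfying Δ² ≤ δM; let H₁, H₂ be edge-disjoint graphs on [n] with 𝐝^{H₁} ⪯ 𝐝 and Δ_{H₂} ≤ KΔ; set 𝐝̃ = 𝐝 − 𝐝^{H₁}, M̃ = Σ_i d̃_i, M̃₂ = Σ_i d̃_i(d̃_i−1), and assume M̃ ≥ cM; let u ≠ v with uv ∉ H₁ ∪ H₂. Let G be chosen uniformly at random from the (assumed nonempty) set 𝒢⁺ of graphs with degree sequence 𝐝 that contain H₁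 and the edge uv and contain no edge of H₂. Let X_u be the number of ordered pairs (x,y) such that xy is an edge of G not in H₁, {x,y} ∩ {u,v} = ∅, and ux is an edge of G ∪ H₂; let X_v be the analogous count with vy an edge of G ∪ H₂; and let X_{uv} be the number of such pairs (x,y) with both ux and vy edges of G ∪ H₂. Then |E X_{uv}| ≤ C·Δ⁴/M, |E X_u − (Σ_{x∈N_{H₁∪H₂}(u)} d̃_x + (d̃_u − 1)·M̃₂/M̃)| ≤ C·Δ⁴/M, and |E X_v − (Σ_{y∈N_{H₁∪H₂}(v)} d̃_y + (d̃_v − 1)·M̃₂/M̃)| ≤ C·Δ⁴/M. -/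
open Filter

noncomputable section

/-- The number of edges of `G`. -/
def nedges {n : ℕ} (G : SimpleGraph (Fin n)) : ℕ := G.edgeSet.ncard

/-- The maximum degree of `G`. -/
def maxDeg {n : ℕ} (G : SimpleGraph (Fin n)) : ℕ := Finset.univ.sup (deg G)

/-- `X_u`: the number of ordered pairs `(x,y)` such that `xy` is an edge of `G` not in `H₁`,
`{x,y} ∩ {u,v} = ∅`, and `ux` is an edge of `G ∪ H₂`. -/
def Xu {n : ℕ} (H₁ H₂ : SimpleGraph (Fin n)) (u v : Fin n) (G : SimpleGraph (Fin n)) : ℕ :=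
  Nat.card {p : Fin n × Fin n // G.Adj p.1 p.2 ∧ ¬ H₁.Adj p.1 p.2 ∧
    p.1 ≠ u ∧ p.1 ≠ v ∧ p.2 ≠ u ∧ p.2 ≠ v ∧ (G ⊔ H₂).Adj u p.1}

/-- `X_v`: the analogous count with `vy` an edge of `G ∪ H₂`. -/
def Xv {n : ℕ} (H₁ H₂ : SimpleGraph (Fin n)) (u v : Fin n) (G : SimpleGraph (Fin n)) : ℕ :=
  Nat.card {p : Fin n × Fin n // G.Adj p.1 p.2 ∧ ¬ H₁.Adj p.1 p.2 ∧
    p.1 ≠ u ∧ p.1 ≠ v ∧ p.2 ≠ u ∧ p.2 ≠ v ∧ (G ⊔ H₂).Adj v p.2}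

/-- `X_{uv}`: such pairs with both `ux` and `vy` edges of `G ∪ H₂`. -/
def Xuv {n : ℕ} (H₁ H₂ : SimpleGraph (Fin n)) (u v : Fin n) (G : SimpleGraph (Fin n)) : ℕ :=
  Nat.card {p : Fin n × Fin n // G.Adj p.1 p.2 ∧ ¬ H₁.Adj p.1 p.2 ∧
    p.1 ≠ u ∧ p.1 ≠ v ∧ p.2 ≠ u ∧ p.2 ≠ v ∧ (G ⊔ H₂).Adj u p.1 ∧ (G ⊔ H₂).Adj v p.2}

/-- The real-valued indicator of a proposition. -/
def ind (P : Prop) : ℝ := open scoped Classical in if P then 1 else 0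

lemma ind_of_true {P : Prop} (h : P) : ind P = 1 := by simp [ind, h]

lemma ind_of_false {P : Prop} (h : ¬ P) : ind P = 0 := by simp [ind, h]

lemma ind_nonneg (P : Prop) : 0 ≤ ind P := by
  unfold ind; split_ifs <;> norm_num

lemma ind_mono {P Q : Prop} (h : P → Q) : ind P ≤ ind Q := by
  by_cases hP : P <;> by_cases hQ : Q <;> simp_all [ind]

lemma ind_congr {P Q : Prop} (h : P ↔ Q) : ind P = ind Q := by rw [propext h]

lemma ind_and (P Q : Prop) : ind (P ∧ Q) = ind P * ind Q := by
  by_cases hP : P <;> by_cases hQ : Q <;> simp_all [ind]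

lemma ind_mul_le_mul {P : Prop} {a b : ℝ} (h : P → a ≤ b) : ind P * a ≤ ind P * b := by
  unfold ind; split_ifs with hP
  · simpa using h hP
  · simp

lemma ind_mul_congr {P : Prop} {a b : ℝ} (h : P → a = b) : ind P * a = ind P * b :=
  le_antisymm (ind_mul_le_mul fun hP => (h hP).le) (ind_mul_le_mul fun hP => (h hP).ge)

lemma sum_ind_eq_ncard {α : Type*} [Fintype α] (P : α → Prop) :
    ∑ x, ind (P x) = ({x | P x}.ncard : ℝ) := by
  classical
  rw [Set.ncard_eq_toFinset_card']
  simp [ind, Finset.sum_boole]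

section Switching

variable {n : ℕ}

lemma deg_eq_sum (G : SimpleGraph (Fin n)) (x : Fin n) : (deg G x : ℝ) = ∑ y, ind (G.Adj x y) := by
  rw [sum_ind_eq_ncard]; rfl

/-- The graphs with degree sequence `d` that contain `H₁` and the edge `uv` and avoid `H₂`. -/
structure Admissible (d : Fin n → ℕ) (H₁ H₂ : SimpleGraph (Fin n)) (u v : Fin n)
    (G : SimpleGraph (Fin n)) : Prop where
  deg_eq : ∀ i, deg G i = d i
  le : ∀ x y, H₁.Adj x y → G.Adj x y
  adj : G.Adj u v
  disj : ∀ x y, G.Adj x y → ¬ H₂.Adj x y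

/-- The unordered pairs `xy` and `pq` coincide. -/
def SamePair (x y p q : Fin n) : Prop := x = p ∧ y = q ∨ x = q ∧ y = p

/-- Replace the edges `pq` and `ab` by `pa` and `qb`. -/
def switch (G : SimpleGraph (Fin n)) (p q a b : Fin n) : SimpleGraph (Fin n) where
  Adj x y := x ≠ y ∧ (G.Adj x y ∧ ¬ SamePair x y p q ∧ ¬ SamePair x y a b ∨
    SamePair x y p a ∨ SamePair x y q b)
  symm := ⟨by
    intro x y
    have := G.adj_comm x y
    unfold SamePair
    grind⟩
  loopless := ⟨by intro x; simp⟩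

/-- Replacing the edges `pq` and `ab` by `pa` and `qb` is a legal move inside the
admissible graphs. -/
structure Switchable (d : Fin n → ℕ) (H₁ H₂ : SimpleGraph (Fin n)) (u v : Fin n)
    (G : SimpleGraph (Fin n)) (p q a b : Fin n) : Prop where
  adm : Admissible d H₁ H₂ u v G
  pq : (G \ H₁).Adj p q
  ab : (G \ H₁).Adj a b
  pq_ne : ¬ SamePair p q u v
  ab_ne : ¬ SamePair a b u v
  pa : ¬ ((G ⊔ H₂).Adj p a ∨ p = a)
  qb : ¬ ((G ⊔ H₂).Adj q b ∨ q = b)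

variable {d dt : Fin n → ℕ} {H₁ H₂ G : SimpleGraph (Fin n)} {u v p q a b : Fin n}

lemma Switchable.ne (h : Switchable d H₁ H₂ u v G p q a b) :
    p ≠ q ∧ p ≠ a ∧ p ≠ b ∧ q ≠ a ∧ q ≠ b ∧ a ≠ b := by
  have h1 := h.pq.ne
  have h2 := h.ab.ne
  have h3 := h.pa
  have h4 := h.qb
  have h5 := h.pq
  have h6 := h.ab
  have h7 := G.adj_comm p q
  have h8 := G.adj_comm a b
  simp only [SimpleGraph.sup_adj, SimpleGraph.sdiff_adj] at *
  grind

lemma Switchable.switch_switch (h : Switchable d H₁ H₂ u v G p q a b) :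
    switch (switch G p q a b) p a q b = G := by
  have h0 := h.ne
  have h3 := h.pa
  have h4 := h.qb
  have h5 := h.pq
  have h6 := h.ab
  have h7 := G.adj_comm p q
  have h8 := G.adj_comm a b
  have h9 := G.adj_comm p a
  have h10 := G.adj_comm q b
  ext x y
  have h11 : G.Adj x y → x ≠ y := fun h => h.ne
  simp only [switch, SamePair, SimpleGraph.sup_adj, SimpleGraph.sdiff_adj] at *
  grind

lemma Switchable.deg_switch (h : Switchable d H₁ H₂ u v G p q a b) (i : Fin n) :
    deg (switch G p q a b) i = deg G i := by
  have h0 := h.ne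
  have h3 := h.pa
  have h4 := h.qb
  have h5 := h.pq
  have h6 := h.ab
  have h7 := G.adj_comm p q
  have h8 := G.adj_comm a b
  have h9 := G.adj_comm p a
  have h10 := G.adj_comm q b
  simp only [SimpleGraph.sup_adj, SimpleGraph.sdiff_adj] at *
  have key : ∀ s t : Fin n, ¬ G.Adj i s → G.Adj i t →
      (∀ y, (switch G p q a b).Adj i y ↔ y = s ∨ G.Adj i y ∧ y ≠ t) →
      deg (switch G p q a b) i = deg G i := by
    intro s t hs ht hst
    have : (switch G p q a b).neighborSet i = insert s (G.neighborSet i \ {t}) := by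
      ext y; simpa using hst y
    unfold deg
    rw [this]
    exact Set.ncard_exchange hs ht
  by_cases hp : i = p
  · subst hp
    apply key a q (by tauto) (by tauto)
    intro y
    have := (G.ne_of_adj : G.Adj i y → _)
    simp only [switch, SamePair]; grind
  by_cases hq : i = q
  · subst hq
    apply key b p (by tauto) (by tauto)
    intro y
    have := (G.ne_of_adj : G.Adj i y → _)
    simp only [switch, SamePair]; grind
  by_cases ha : i = a
  · subst ha
    apply key p b (by tauto) (by tauto)
    intro y
    have := (G.ne_of_adj : G.Adj i y → _)
    simp only [switch, SamePair]; grind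
  by_cases hb : i = b
  · subst hb
    apply key q a (by tauto) (by tauto)
    intro y
    have := (G.ne_of_adj : G.Adj i y → _)
    simp only [switch, SamePair]; grind
  unfold deg
  congr 1
  ext y
  have := (G.ne_of_adj : G.Adj i y → _)
  simp only [switch, SamePair, SimpleGraph.mem_neighborSet]
  grind

lemma Switchable.switch (h : Switchable d H₁ H₂ u v G p q a b) :
    Switchable d H₁ H₂ u v (switch G p q a b) p a q b := by
  have h0 := h.ne
  have h1 := h.pq_ne
  have h2 := h.ab_ne
  have h3 := h.pa
  have h4 := h.qb
  have h5 := h.pq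
  have h6 := h.ab
  have e1 := G.adj_comm p q
  have e2 := G.adj_comm a b
  have e3 := G.adj_comm p a
  have e4 := G.adj_comm q b
  have f1 := H₁.adj_comm p q
  have f2 := H₁.adj_comm a b
  have f3 := H₁.adj_comm p a
  have f4 := H₁.adj_comm q b
  have g3 := H₂.adj_comm p a
  have g4 := H₂.adj_comm q b
  have uv := h.adm.adj
  have uvn := uv.ne
  have vu := uv.symm
  have hle := h.adm.le
  have hdj := h.adm.disj
  simp only [SimpleGraph.sup_adj, SimpleGraph.sdiff_adj] at *
  constructor
  · constructor
    · intro i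
      rw [h.deg_switch, h.adm.deg_eq]
    · intro x y hxy
      have := hle x y hxy
      have hne := hxy.ne
      simp only [_root_.switch, SamePair] at *
      grind
    · simp only [_root_.switch, SamePair] at *
      grind
    · intro x y hxy
      have := hdj x y
      simp only [_root_.switch, SamePair] at *
      grind
  all_goals
    simp only [SimpleGraph.sup_adj, SimpleGraph.sdiff_adj, _root_.switch, SamePair] at *
    grind

lemma sum_switchable (d : Fin n → ℕ) (H₁ H₂ : SimpleGraph (Fin n)) (u v : Fin n)
    (F : SimpleGraph (Fin n) → Fin n → Fin n → ℝ) :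
    ∑ G, ∑ p, ∑ q, ∑ a, ∑ b, ind (Switchable d H₁ H₂ u v G p q a b) * F G p q =
      ∑ G, ∑ p, ∑ q, ∑ a, ∑ b, ind (Switchable d H₁ H₂ u v G p q a b) *
        F (switch G p q a b) p a := by
  classical
  have conv : ∀ F' : SimpleGraph (Fin n) → Fin n → Fin n → Fin n → Fin n → ℝ,
      ∑ G, ∑ p, ∑ q, ∑ a, ∑ b, ind (Switchable d H₁ H₂ u v G p q a b) * F' G p q a b =
      ∑ t : SimpleGraph (Fin n) × Fin n × Fin n × Fin n × Fin n with
        Switchable d H₁ H₂ u v t.1 t.2.1 t.2.2.1 t.2.2.2.1 t.2.2.2.2,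
        F' t.1 t.2.1 t.2.2.1 t.2.2.2.1 t.2.2.2.2 := by
    intro F'
    rw [Finset.sum_filter]
    simp only [Fintype.sum_prod_type, ind, ite_mul, one_mul, zero_mul]
  rw [conv fun G p q _ _ => F G p q, conv fun G p q a b => F (switch G p q a b) p a]
  let φ : SimpleGraph (Fin n) × Fin n × Fin n × Fin n × Fin n →
      SimpleGraph (Fin n) × Fin n × Fin n × Fin n × Fin n :=
    fun t => (switch t.1 t.2.1 t.2.2.1 t.2.2.2.1 t.2.2.2.2,
      t.2.1, t.2.2.2.1, t.2.2.1, t.2.2.2.2)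
  refine Finset.sum_nbij' φ φ ?_ ?_ ?_ ?_ ?_
  · rintro ⟨G, p, q, a, b⟩ ht
    simp only [Finset.mem_filter, Finset.mem_univ, true_and] at ht
    simpa [φ] using ht.switch
  · rintro ⟨G, p, q, a, b⟩ ht
    simp only [Finset.mem_filter, Finset.mem_univ, true_and] at ht
    simpa [φ] using ht.switch
  · rintro ⟨G, p, q, a, b⟩ ht
    simp only [Finset.mem_filter, Finset.mem_univ, true_and] at ht
    simp [φ, ht.switch_switch]
  · rintro ⟨G, p, q, a, b⟩ ht
    simp only [Finset.mem_filter, Finset.mem_univ, true_and] at ht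
    simp [φ, ht.switch_switch]
  · rintro ⟨G, p, q, a, b⟩ ht
    simp only [Finset.mem_filter, Finset.mem_univ, true_and] at ht
    simp [φ, ht.switch_switch]

lemma sum_ind_eq_mul (x : Fin n) (f : Fin n → ℝ) : ∑ y, ind (y = x) * f y = f x := by
  simp [ind]

lemma sum_sum_mul_le {α : Fin n → ℝ} {β : Fin n → Fin n → ℝ} {A B : ℝ} (hα : ∀ p, 0 ≤ α p)
    (hB : 0 ≤ B) (hA : ∑ p, α p ≤ A) (hβ : ∀ p, ∑ q, β p q ≤ B) :
    ∑ p, ∑ q, α p * β p q ≤ A * B := by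
  calc ∑ p, ∑ q, α p * β p q ≤ ∑ p, α p * B := by
        refine Finset.sum_le_sum fun p _ => ?_
        rw [← Finset.mul_sum]
        exact mul_le_mul_of_nonneg_left (hβ p) (hα p)
    _ = (∑ p, α p) * B := by rw [Finset.sum_mul]
    _ ≤ A * B := mul_le_mul_of_nonneg_right hA hB

lemma sum_four_mul_le {α γ : Fin n → ℝ} {β ε : Fin n → Fin n → ℝ} {A B C E : ℝ}
    (hα : ∀ p, 0 ≤ α p) (hβ : ∀ p q, 0 ≤ β p q) (hγ : ∀ a, 0 ≤ γ a)
    (hB : 0 ≤ B) (hC : 0 ≤ C) (hE : 0 ≤ E) (hαA : ∑ p, α p ≤ A) (hβB : ∀ p, ∑ q, β p q ≤ B)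
    (hγC : ∑ a, γ a ≤ C) (hεE : ∀ a, ∑ b, ε a b ≤ E) :
    ∑ p, ∑ q, ∑ a, ∑ b, α p * β p q * (γ a * ε a b) ≤ A * B * (C * E) := by
  have h2 := sum_sum_mul_le hγ hE hγC hεE
  have h1 := sum_sum_mul_le hα hB hαA hβB
  have h0 : 0 ≤ ∑ p, ∑ q, α p * β p q :=
    Finset.sum_nonneg fun p _ => Finset.sum_nonneg fun q _ => mul_nonneg (hα p) (hβ p q)
  calc ∑ p, ∑ q, ∑ a, ∑ b, α p * β p q * (γ a * ε a b)
      = (∑ p, ∑ q, α p * β p q) * ∑ a, ∑ b, γ a * ε a b := by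
        simp only [Finset.sum_mul]
        simp only [Finset.mul_sum]
    _ ≤ (∑ p, ∑ q, α p * β p q) * (C * E) := mul_le_mul_of_nonneg_left h2 h0
    _ ≤ A * B * (C * E) := mul_le_mul_of_nonneg_right h1 (mul_nonneg hC hE)

/-- The standing bounds on the degree data: `dt` is the residual degree sequence, `D` bounds
the degrees and `K * D` bounds the degrees of `H₂`. -/
structure DegreeData (K D : ℝ) (d dt : Fin n → ℕ) (H₁ H₂ : SimpleGraph (Fin n))
    (u v : Fin n) : Prop where
  one_le_K : 1 ≤ K
  one_le_D : 1 ≤ D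
  d_le : ∀ i, (d i : ℝ) ≤ D
  dt_eq : ∀ i, (dt i : ℝ) = d i - deg H₁ i
  deg_le : ∀ i, (deg H₂ i : ℝ) ≤ K * D
  ne : u ≠ v
  not_adj : ¬ (H₁ ⊔ H₂).Adj u v

variable {K D : ℝ}

namespace DegreeData

lemma symm (h : DegreeData K D d dt H₁ H₂ u v) : DegreeData K D d dt H₁ H₂ v u :=
  ⟨h.1, h.2, h.3, h.4, h.5, h.ne.symm, fun h' => h.not_adj h'.symm⟩

lemma dt_le (h : DegreeData K D d dt H₁ H₂ u v) (i : Fin n) : (dt i : ℝ) ≤ D := by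
  have h1 := h.d_le i
  have h2 := h.dt_eq i
  have h3 : (0 : ℝ) ≤ deg H₁ i := by positivity
  linarith

lemma sum_rest (h : DegreeData K D d dt H₁ H₂ u v) (hG : Admissible d H₁ H₂ u v G) (x : Fin n) :
    ∑ y, ind ((G \ H₁).Adj x y) = dt x := by
  have h1 : (deg G x : ℝ) = d x := by rw [hG.deg_eq]
  rw [h.dt_eq, ← h1, deg_eq_sum, deg_eq_sum, ← Finset.sum_sub_distrib]
  refine Finset.sum_congr rfl fun y _ => ?_
  have := hG.le x y
  by_cases h2 : G.Adj x y <;> by_cases h3 : H₁.Adj x y <;>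
    simp_all [ind]

lemma sum_rest_le (h : DegreeData K D d dt H₁ H₂ u v) (hG : Admissible d H₁ H₂ u v G)
    (x : Fin n) : ∑ y, ind ((G \ H₁).Adj x y) ≤ D := by
  rw [h.sum_rest hG]; exact h.dt_le x

lemma sum_union_le (h : DegreeData K D d dt H₁ H₂ u v) (hG : Admissible d H₁ H₂ u v G)
    (x : Fin n) : ∑ y, ind ((G ⊔ H₂).Adj x y) ≤ (K + 1) * D := by
  have h1 : (deg G x : ℝ) ≤ D := by rw [hG.deg_eq]; exact h.d_le x
  have h2 := h.deg_le x
  rw [deg_eq_sum] at h1 h2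
  calc ∑ y, ind ((G ⊔ H₂).Adj x y) ≤ ∑ y, (ind (G.Adj x y) + ind (H₂.Adj x y)) := by
        refine Finset.sum_le_sum fun y _ => ?_
        by_cases h3 : G.Adj x y <;> by_cases h4 : H₂.Adj x y <;> simp [ind, h3, h4]
    _ ≤ (K + 1) * D := by rw [Finset.sum_add_distrib]; linarith

lemma sum_closed_le (h : DegreeData K D d dt H₁ H₂ u v) (hG : Admissible d H₁ H₂ u v G)
    (x : Fin n) : ∑ y, ind ((G ⊔ H₂).Adj x y ∨ x = y) ≤ (K + 2) * D := by
  have h1 := h.sum_union_le hG x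
  have h2 := h.one_le_D
  calc ∑ y, ind ((G ⊔ H₂).Adj x y ∨ x = y)
      ≤ ∑ y, (ind ((G ⊔ H₂).Adj x y) + ind (y = x) * 1) := by
        refine Finset.sum_le_sum fun y _ => ?_
        by_cases h3 : (G ⊔ H₂).Adj x y <;> by_cases h4 : x = y <;>
          simp [ind, h3, h4, eq_comm]
    _ ≤ (K + 2) * D := by rw [Finset.sum_add_distrib, sum_ind_eq_mul]; linarith

lemma sum_sum_rest_mul (h : DegreeData K D d dt H₁ H₂ u v) (hG : Admissible d H₁ H₂ u v G)
    (w : Fin n → ℝ) : ∑ a, ∑ b, ind ((G \ H₁).Adj a b) * w a = ∑ a, dt a * w a := by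
  refine Finset.sum_congr rfl fun a _ => ?_
  rw [← Finset.sum_mul, h.sum_rest hG]

lemma sum_switchable_le (h : DegreeData K D d dt H₁ H₂ u v) (hG : Admissible d H₁ H₂ u v G)
    {w : Fin n → ℝ} (hw : ∀ a, 0 ≤ w a) :
    ∑ a, ∑ b, ind (Switchable d H₁ H₂ u v G p q a b) * w a ≤ ∑ a, dt a * w a := by
  rw [← h.sum_sum_rest_mul hG]
  refine Finset.sum_le_sum fun a _ => Finset.sum_le_sum fun b _ => ?_
  exact mul_le_mul_of_nonneg_right (ind_mono fun h => h.ab) (hw a)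

lemma le_sum_switchable (h : DegreeData K D d dt H₁ H₂ u v) (hG : Admissible d H₁ H₂ u v G)
    {w : Fin n → ℝ} {W : ℝ} (hw : ∀ a, 0 ≤ w a) (hW : ∀ a, w a ≤ W) (hpq : (G \ H₁).Adj p q)
    (hne : ¬ SamePair p q u v) :
    ∑ a, dt a * w a - W * ((2 * K + 6) * D ^ 2) ≤
      ∑ a, ∑ b, ind (Switchable d H₁ H₂ u v G p q a b) * w a := by
  have hK := h.one_le_K
  have hD := h.one_le_D
  have hW0 : 0 ≤ W := (hw p).trans (hW p)
  have b1 := sum_sum_mul_le (α := fun a => ind ((G ⊔ H₂).Adj p a ∨ p = a))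
    (β := fun a b => ind ((G \ H₁).Adj a b)) (B := D) (fun _ => ind_nonneg _) (by linarith)
    (h.sum_closed_le hG p) (h.sum_rest_le hG)
  have b2 := sum_sum_mul_le (α := fun b => ind ((G ⊔ H₂).Adj q b ∨ q = b))
    (β := fun b a => ind ((G \ H₁).Adj a b)) (B := D) (fun _ => ind_nonneg _) (by linarith)
    (h.sum_closed_le hG q) (fun b => by
      simpa only [SimpleGraph.adj_comm _ b] using h.sum_rest_le hG b)
  rw [Finset.sum_comm] at b2
  have b3 : ∀ s t : Fin n, ∑ a, ∑ b, ind (a = s) * (ind (b = t) * 1) = (1 : ℝ) := by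
    intro s t
    simp only [← Finset.mul_sum, sum_ind_eq_mul]
  calc ∑ a, dt a * w a - W * ((2 * K + 6) * D ^ 2)
      ≤ ∑ a, ∑ b, ind ((G \ H₁).Adj a b) * w a
        - W * (∑ a, ∑ b, ind ((G ⊔ H₂).Adj p a ∨ p = a) * ind ((G \ H₁).Adj a b)
          + ∑ a, ∑ b, ind ((G ⊔ H₂).Adj q b ∨ q = b) * ind ((G \ H₁).Adj a b)
          + ∑ a, ∑ b, ind (a = u) * (ind (b = v) * 1)
          + ∑ a, ∑ b, ind (a = v) * (ind (b = u) * 1)) := by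
        rw [h.sum_sum_rest_mul hG, b3, b3]
        gcongr
        nlinarith
    _ = ∑ a, ∑ b, (ind ((G \ H₁).Adj a b) * w a
        - W * (ind ((G ⊔ H₂).Adj p a ∨ p = a) * ind ((G \ H₁).Adj a b)
          + ind ((G ⊔ H₂).Adj q b ∨ q = b) * ind ((G \ H₁).Adj a b)
          + ind (a = u) * (ind (b = v) * 1) + ind (a = v) * (ind (b = u) * 1))) := by
        simp only [Finset.sum_sub_distrib, ← Finset.mul_sum, Finset.sum_add_distrib]
    _ ≤ _ := by
        refine Finset.sum_le_sum fun a _ => Finset.sum_le_sum fun b _ => ?_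
        have n1 := ind_nonneg ((G ⊔ H₂).Adj p a ∨ p = a)
        have n2 := ind_nonneg ((G ⊔ H₂).Adj q b ∨ q = b)
        have n3 := ind_nonneg (a = u)
        have n4 := ind_nonneg (b = v)
        have n5 := ind_nonneg (a = v)
        have n6 := ind_nonneg (b = u)
        have n7 := ind_nonneg ((G \ H₁).Adj a b)
        have hwa := hW a
        by_cases hs : Switchable d H₁ H₂ u v G p q a b
        · rw [ind_of_true hs, ind_of_true hs.ab]
          have : 0 ≤ W * (ind ((G ⊔ H₂).Adj p a ∨ p = a) * 1
            + ind ((G ⊔ H₂).Adj q b ∨ q = b) * 1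
            + ind (a = u) * (ind (b = v) * 1) + ind (a = v) * (ind (b = u) * 1)) := by
            positivity
          linarith
        rw [ind_of_false hs, zero_mul]
        by_cases hr : (G \ H₁).Adj a b
        · suffices 1 ≤ ind ((G ⊔ H₂).Adj p a ∨ p = a) * ind ((G \ H₁).Adj a b)
              + ind ((G ⊔ H₂).Adj q b ∨ q = b) * ind ((G \ H₁).Adj a b)
              + ind (a = u) * (ind (b = v) * 1) + ind (a = v) * (ind (b = u) * 1) by
            have := mul_le_mul_of_nonneg_left this hW0
            rw [ind_of_true hr] at *
            linarith
          by_contra hlt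
          refine hs ⟨hG, hpq, hr, hne, ?_, ?_, ?_⟩
          · rintro (⟨h1, h2⟩ | ⟨h1, h2⟩) <;> apply hlt
            · rw [ind_of_true h1, ind_of_true h2]; nlinarith
            · rw [ind_of_true h1, ind_of_true h2]; nlinarith
          · intro h1; apply hlt
            rw [ind_of_true h1, ind_of_true hr]; nlinarith
          · intro h1; apply hlt
            rw [ind_of_true h1, ind_of_true hr]; nlinarith
        · rw [ind_of_false hr]
          have : 0 ≤ W * (ind ((G ⊔ H₂).Adj p a ∨ p = a) * 0
            + ind ((G ⊔ H₂).Adj q b ∨ q = b) * 0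
            + ind (a = u) * (ind (b = v) * 1) + ind (a = v) * (ind (b = u) * 1)) := by
            positivity
          linarith

/-- The switchings starting from a weighted directed edge are counted by `∑ a, dt a`, up to
a bounded multiple of `D ^ 2`. -/
lemma sum_weight_bounds (h : DegreeData K D d dt H₁ H₂ u v)
    {g : SimpleGraph (Fin n) → Fin n → Fin n → ℝ} (hg : ∀ G p q, 0 ≤ g G p q)
    (hs : ∀ G p q, g G p q ≠ 0 → (G \ H₁).Adj p q ∧ ¬ SamePair p q u v) :
    (∑ a, (dt a : ℝ) - (2 * K + 6) * D ^ 2) *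
        ∑ G, ind (Admissible d H₁ H₂ u v G) * ∑ p, ∑ q, g G p q ≤
      ∑ G, ∑ p, ∑ q, ∑ a, ∑ b, ind (Switchable d H₁ H₂ u v G p q a b) * g G p q ∧
    ∑ G, ∑ p, ∑ q, ∑ a, ∑ b, ind (Switchable d H₁ H₂ u v G p q a b) * g G p q ≤
      (∑ a, (dt a : ℝ)) * ∑ G, ind (Admissible d H₁ H₂ u v G) * ∑ p, ∑ q, g G p q := by
  have e : ∀ G p q, ∑ a, ∑ b, ind (Switchable d H₁ H₂ u v G p q a b) * g G p q =
      ind (Admissible d H₁ H₂ u v G) * (g G p q *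
        ∑ a, ∑ b, ind (Switchable d H₁ H₂ u v G p q a b) * 1) := by
    intro G p q
    simp only [mul_one, Finset.mul_sum]
    refine Finset.sum_congr rfl fun a _ => Finset.sum_congr rfl fun b _ => ?_
    by_cases hsw : Switchable d H₁ H₂ u v G p q a b
    · rw [ind_of_true hsw, ind_of_true hsw.adm]; ring
    · rw [ind_of_false hsw]; ring
  have e' : ∀ c : ℝ, c * ∑ G, ind (Admissible d H₁ H₂ u v G) * ∑ p, ∑ q, g G p q =
      ∑ G, ∑ p, ∑ q, ind (Admissible d H₁ H₂ u v G) * (g G p q * c) := by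
    intro c
    simp only [Finset.mul_sum]
    refine Finset.sum_congr rfl fun G _ => Finset.sum_congr rfl fun p _ =>
      Finset.sum_congr rfl fun q _ => ?_
    ring
  simp only [e, e']
  constructor <;> refine Finset.sum_le_sum fun G _ => Finset.sum_le_sum fun p _ =>
    Finset.sum_le_sum fun q _ => ind_mul_le_mul fun hG => ?_
  · by_cases h0 : g G p q = 0
    · simp [h0]
    obtain ⟨h1, h2⟩ := hs G p q h0
    have := h.le_sum_switchable hG (fun _ => zero_le_one) (fun _ => le_refl (1 : ℝ)) h1 h2
    simp only [mul_one, one_mul] at this ⊢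
    exact mul_le_mul_of_nonneg_left this (hg G p q)
  · have := h.sum_switchable_le (p := p) (q := q) hG (w := fun _ => 1) (fun _ => zero_le_one)
    simp only [mul_one] at this ⊢
    exact mul_le_mul_of_nonneg_left this (hg G p q)

/-- An upper bound for the expected weight of the directed edges, from a bound on the number of
switchings arriving at a given graph. -/
lemma sum_weight_le (h : DegreeData K D d dt H₁ H₂ u v)
    {g : SimpleGraph (Fin n) → Fin n → Fin n → ℝ} (hg : ∀ G p q, 0 ≤ g G p q)
    (hs : ∀ G p q, g G p q ≠ 0 → (G \ H₁).Adj p q ∧ ¬ SamePair p q u v) {A B : ℝ}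
    (hA : ∀ G, Admissible d H₁ H₂ u v G → ∑ p, ∑ q, g G p q ≤ A)
    (hB : ∀ G, Admissible d H₁ H₂ u v G → ∑ p, ∑ q, ∑ a, ∑ b,
      ind (Switchable d H₁ H₂ u v G p q a b) * g (_root_.switch G p q a b) p a ≤ B) :
    (∑ G, ind (Admissible d H₁ H₂ u v G) * ∑ p, ∑ q, g G p q) * ∑ a, (dt a : ℝ) ≤
      (∑ G, ind (Admissible d H₁ H₂ u v G)) * (A * ((2 * K + 6) * D ^ 2) + B) := by
  have hK := h.one_le_K
  have h1 := (h.sum_weight_bounds hg hs).1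
  rw [sum_switchable] at h1
  have h2 : ∑ G, ∑ p, ∑ q, ∑ a, ∑ b, ind (Switchable d H₁ H₂ u v G p q a b) *
      g (_root_.switch G p q a b) p a ≤ (∑ G, ind (Admissible d H₁ H₂ u v G)) * B := by
    rw [Finset.sum_mul]
    refine Finset.sum_le_sum fun G _ => ?_
    by_cases hG : Admissible d H₁ H₂ u v G
    · rw [ind_of_true hG, one_mul]; exact hB G hG
    · have : ∀ p q a b, ind (Switchable d H₁ H₂ u v G p q a b) = 0 :=
        fun p q a b => ind_of_false fun h => hG h.adm
      simp [this, ind_of_false hG]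
  have h3 : ∑ G, ind (Admissible d H₁ H₂ u v G) * ∑ p, ∑ q, g G p q ≤
      (∑ G, ind (Admissible d H₁ H₂ u v G)) * A := by
    rw [Finset.sum_mul]
    exact Finset.sum_le_sum fun G _ => ind_mul_le_mul fun hG => hA G hG
  have h4 := mul_le_mul_of_nonneg_right h3
    (by positivity : 0 ≤ (2 * K + 6) * D ^ 2)
  nlinarith

lemma sum_rest_ne (h : DegreeData K D d dt H₁ H₂ u v) (hG : Admissible d H₁ H₂ u v G) :
    ∑ q, ind ((G \ H₁).Adj u q ∧ q ≠ v) = dt u - 1 := by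
  have h1 : ∑ q, ind (q = v) * (1 : ℝ) = 1 := sum_ind_eq_mul v fun _ => 1
  rw [← h.sum_rest hG, ← h1, ← Finset.sum_sub_distrib]
  refine Finset.sum_congr rfl fun q _ => ?_
  have h2 : (G \ H₁).Adj u v := by
    have := h.not_adj
    simp only [SimpleGraph.sup_adj, SimpleGraph.sdiff_adj] at *
    exact ⟨hG.adj, by tauto⟩
  by_cases hq : q = v
  · subst hq; simp [ind, -SimpleGraph.sdiff_adj, h2]
  · rw [ind_of_false hq, ind_congr (and_iff_left hq)]; ring

lemma abs_sum_neighbour_weight_sub_le (h : DegreeData K D d dt H₁ H₂ u v) {w : Fin n → ℝ}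
    (hw : ∀ a, 0 ≤ w a) (hW : ∀ a, w a ≤ D) :
    |(∑ G, ind (Admissible d H₁ H₂ u v G) * ∑ q, ind ((G \ H₁).Adj u q ∧ q ≠ v) * w q) *
        ∑ a, (dt a : ℝ) -
      (∑ G, ind (Admissible d H₁ H₂ u v G)) * ((dt u - 1) * ∑ a, dt a * w a)| ≤
      (∑ G, ind (Admissible d H₁ H₂ u v G)) * ((2 * K + 6) * D ^ 4) := by
  have hK := h.one_le_K
  have hD := h.one_le_D
  have huv := h.ne
  set N := ∑ G, ind (Admissible d H₁ H₂ u v G) with hN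
  set S := ∑ G, ind (Admissible d H₁ H₂ u v G) *
    ∑ q, ind ((G \ H₁).Adj u q ∧ q ≠ v) * w q with hS
  let g : SimpleGraph (Fin n) → Fin n → Fin n → ℝ :=
    fun G p q => ind (p = u) * (ind ((G \ H₁).Adj u q ∧ q ≠ v) * w q)
  have hg : ∀ G p q, 0 ≤ g G p q := fun G p q =>
    mul_nonneg (ind_nonneg _) (mul_nonneg (ind_nonneg _) (hw _))
  have hs : ∀ G p q, g G p q ≠ 0 → (G \ H₁).Adj p q ∧ ¬ SamePair p q u v := by
    intro G p q h0
    by_cases hp : p = u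
    · by_cases hq : (G \ H₁).Adj u q ∧ q ≠ v
      · subst hp
        exact ⟨hq.1, by unfold SamePair; grind⟩
      · exact absurd (by simp only [g, ind_of_false hq]; ring) h0
    · exact absurd (by simp only [g, ind_of_false hp]; ring) h0
  have eg : ∀ G, ∑ p, ∑ q, g G p q = ∑ q, ind ((G \ H₁).Adj u q ∧ q ≠ v) * w q := by
    intro G
    simp only [g, ← Finset.mul_sum, sum_ind_eq_mul]
  obtain ⟨h1, h2⟩ := h.sum_weight_bounds hg hs
  rw [sum_switchable] at h1 h2
  simp only [eg] at h1 h2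
  rw [← hS] at h1 h2
  have key : ∀ G p q, ∑ a, ∑ b, ind (Switchable d H₁ H₂ u v G p q a b) *
      g (_root_.switch G p q a b) p a = ind (Admissible d H₁ H₂ u v G) *
        (ind (p = u) * (ind ((G \ H₁).Adj u q ∧ q ≠ v) *
          ∑ a, ∑ b, ind (Switchable d H₁ H₂ u v G p q a b) * w a)) := by
    intro G p q
    simp only [Finset.mul_sum]
    refine Finset.sum_congr rfl fun a _ => Finset.sum_congr rfl fun b _ => ?_
    by_cases hsw : Switchable d H₁ H₂ u v G p q a b
    · by_cases hp : p = u
      · subst hp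
        have h3 : (_root_.switch G p q a b \ H₁).Adj p a ∧ a ≠ v :=
          ⟨hsw.switch.pq, fun hav => hsw.pa (Or.inl (Or.inl (hav ▸ hsw.adm.adj)))⟩
        have h4 : (G \ H₁).Adj p q ∧ q ≠ v :=
          ⟨hsw.pq, fun hqv => hsw.pq_ne (Or.inl ⟨rfl, hqv⟩)⟩
        simp only [g, ind_of_true hsw, ind_of_true hsw.adm, ind_of_true h3, ind_of_true h4]
        ring
      · simp only [g, ind_of_false hp]; ring
    · simp only [ind_of_false hsw]; ring
  have e' : ∀ c : ℝ, N * ((dt u - 1) * c) = ∑ G, ∑ p, ∑ q, ind (Admissible d H₁ H₂ u v G) *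
      (ind (p = u) * (ind ((G \ H₁).Adj u q ∧ q ≠ v) * c)) := by
    intro c
    rw [hN, Finset.sum_mul]
    refine Finset.sum_congr rfl fun G _ => ?_
    have hu : ∑ p, ind (p = u) * (1 : ℝ) = 1 := sum_ind_eq_mul u fun _ => 1
    simp only [mul_one] at hu
    simp only [← Finset.mul_sum, ← Finset.sum_mul]
    exact ind_mul_congr fun hG => by rw [h.sum_rest_ne hG, hu, one_mul]
  simp only [key] at h1 h2
  have u1 : ∑ G, ∑ p, ∑ q, ind (Admissible d H₁ H₂ u v G) *
        (ind (p = u) * (ind ((G \ H₁).Adj u q ∧ q ≠ v) *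
          ∑ a, ∑ b, ind (Switchable d H₁ H₂ u v G p q a b) * w a)) ≤
      N * ((dt u - 1) * ∑ a, dt a * w a) := by
    rw [e']
    refine Finset.sum_le_sum fun G _ => Finset.sum_le_sum fun p _ =>
      Finset.sum_le_sum fun q _ => ind_mul_le_mul fun hG => ind_mul_le_mul fun hp =>
        ind_mul_le_mul fun hq => ?_
    exact h.sum_switchable_le hG hw
  have u2 : N * ((dt u - 1) * (∑ a, dt a * w a - D * ((2 * K + 6) * D ^ 2))) ≤
      ∑ G, ∑ p, ∑ q, ind (Admissible d H₁ H₂ u v G) *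
        (ind (p = u) * (ind ((G \ H₁).Adj u q ∧ q ≠ v) *
          ∑ a, ∑ b, ind (Switchable d H₁ H₂ u v G p q a b) * w a)) := by
    rw [e']
    refine Finset.sum_le_sum fun G _ => Finset.sum_le_sum fun p _ =>
      Finset.sum_le_sum fun q _ => ind_mul_le_mul fun hG => ind_mul_le_mul fun hp =>
        ind_mul_le_mul fun hq => ?_
    subst hp
    exact h.le_sum_switchable hG hw hW hq.1 (by unfold SamePair; grind)
  have hSN : S ≤ N * (D * D) := by
    rw [hS, hN, Finset.sum_mul]
    refine Finset.sum_le_sum fun G _ => ind_mul_le_mul fun hG => ?_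
    calc ∑ q, ind ((G \ H₁).Adj u q ∧ q ≠ v) * w q ≤ ∑ q, ind ((G \ H₁).Adj u q) * D :=
          Finset.sum_le_sum fun q _ => mul_le_mul (ind_mono And.left) (hW q) (hw q) (ind_nonneg _)
      _ ≤ D * D := by
          rw [← Finset.sum_mul]
          exact mul_le_mul_of_nonneg_right (h.sum_rest_le hG u) (by linarith)
  have hN0 : 0 ≤ N := Finset.sum_nonneg fun G _ => ind_nonneg _
  have hdu := h.dt_le u
  have hc : 0 ≤ (2 * K + 6) * D ^ 2 := by positivity
  have v1 := mul_le_mul_of_nonneg_right hSN hc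
  have v2 : N * ((dt u - 1) * (D * ((2 * K + 6) * D ^ 2))) ≤
      N * (D * (D * ((2 * K + 6) * D ^ 2))) :=
    mul_le_mul_of_nonneg_left
      (mul_le_mul_of_nonneg_right (by linarith) (by positivity)) hN0
  rw [abs_le]
  constructor
  · linear_combination h2 + u2 + v2
  · linear_combination h1 + u1 + v1

lemma sum_common_neighbour_le (h : DegreeData K D d dt H₁ H₂ u v) :
    (∑ G, ind (Admissible d H₁ H₂ u v G) *
        ∑ x, ind ((G \ H₁).Adj v x ∧ x ≠ u ∧ (G ⊔ H₂).Adj u x)) * ∑ a, (dt a : ℝ) ≤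
      (∑ G, ind (Admissible d H₁ H₂ u v G)) * ((3 * K + 7) * D ^ 4) := by
  have hK := h.one_le_K
  have hD := h.one_le_D
  have huv := h.ne
  let g : SimpleGraph (Fin n) → Fin n → Fin n → ℝ :=
    fun G p q => ind (p = v) * ind ((G \ H₁).Adj v q ∧ q ≠ u ∧ (G ⊔ H₂).Adj u q)
  have eg : ∀ G, ∑ p, ∑ q, g G p q =
      ∑ q, ind ((G \ H₁).Adj v q ∧ q ≠ u ∧ (G ⊔ H₂).Adj u q) := by
    intro G
    simp only [g, ← Finset.mul_sum, sum_ind_eq_mul]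
  have key := h.sum_weight_le (g := g) (A := D) (B := 1 * D * ((K + 1) * D * D))
    (fun G p q => mul_nonneg (ind_nonneg _) (ind_nonneg _)) ?_ ?_ ?_
  · simp only [eg] at key
    refine key.trans (mul_le_mul_of_nonneg_left ?_ (Finset.sum_nonneg fun G _ => ind_nonneg _))
    have : D ^ 3 ≤ D ^ 4 := pow_le_pow_right₀ hD (by norm_num)
    nlinarith
  · intro G p q h0
    by_cases hp : p = v
    · by_cases hq : (G \ H₁).Adj v q ∧ q ≠ u ∧ (G ⊔ H₂).Adj u q
      · subst hp
        exact ⟨hq.1, by unfold SamePair; grind⟩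
      · exact absurd (by simp only [g, ind_of_false hq]; ring) h0
    · exact absurd (by simp only [g, ind_of_false hp]; ring) h0
  · intro G hG
    rw [eg]
    exact (Finset.sum_le_sum fun q _ => ind_mono And.left).trans (h.sum_rest_le hG v)
  · intro G hG
    have h1 : ∑ p, ind (p = v) ≤ (1 : ℝ) := by
      simpa using (sum_ind_eq_mul v fun _ => (1 : ℝ)).le
    refine le_trans ?_ (sum_four_mul_le (α := fun p => ind (p = v))
      (β := fun p q => ind ((G \ H₁).Adj p q)) (γ := fun a => ind ((G ⊔ H₂).Adj u a))
      (ε := fun a b => ind ((G \ H₁).Adj a b)) (fun _ => ind_nonneg _)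
      (fun _ _ => ind_nonneg _) (fun _ => ind_nonneg _) (by linarith) (by positivity)
      (by linarith) h1 (h.sum_rest_le hG) (h.sum_union_le hG u) (h.sum_rest_le hG))
    refine Finset.sum_le_sum fun p _ => Finset.sum_le_sum fun q _ => Finset.sum_le_sum fun a _ =>
      Finset.sum_le_sum fun b _ => ?_
    simp only [g, ← ind_and]
    refine ind_mono ?_
    rintro ⟨hsw, rfl, -, hau, h2⟩
    refine ⟨⟨rfl, hsw.pq⟩, ?_, hsw.ab⟩
    have h3 := hsw.ne
    simp only [_root_.switch, SamePair, SimpleGraph.sup_adj] at h2 ⊢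
    grind

lemma sum_path_le (h : DegreeData K D d dt H₁ H₂ u v) :
    (∑ G, ind (Admissible d H₁ H₂ u v G) * ∑ x, ∑ y, ind ((G \ H₁).Adj x y ∧
        x ≠ u ∧ x ≠ v ∧ y ≠ u ∧ y ≠ v ∧ (G ⊔ H₂).Adj u x ∧ (G ⊔ H₂).Adj v y)) *
          ∑ a, (dt a : ℝ) ≤
      (∑ G, ind (Admissible d H₁ H₂ u v G)) *
        (((K + 1) * (2 * K + 6) + (K + 1) ^ 2) * D ^ 4) := by
  have hK := h.one_le_K
  have hD := h.one_le_D
  have huv := h.ne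
  let g : SimpleGraph (Fin n) → Fin n → Fin n → ℝ := fun G x y => ind ((G \ H₁).Adj x y ∧
    x ≠ u ∧ x ≠ v ∧ y ≠ u ∧ y ≠ v ∧ (G ⊔ H₂).Adj u x ∧ (G ⊔ H₂).Adj v y)
  have key := h.sum_weight_le (g := g) (A := (K + 1) * D * D)
    (B := (K + 1) * D * D * ((K + 1) * D * D))
    (fun G p q => ind_nonneg _) ?_ ?_ ?_
  · refine key.trans_eq ?_
    ring
  · intro G p q h0
    by_cases hq : (G \ H₁).Adj p q ∧
      p ≠ u ∧ p ≠ v ∧ q ≠ u ∧ q ≠ v ∧ (G ⊔ H₂).Adj u p ∧ (G ⊔ H₂).Adj v q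
    · exact ⟨hq.1, by unfold SamePair; grind⟩
    · exact absurd (by simp only [g, ind_of_false hq]) h0
  · intro G hG
    refine le_trans ?_ (sum_sum_mul_le (α := fun p => ind ((G ⊔ H₂).Adj u p))
      (β := fun p q => ind ((G \ H₁).Adj p q)) (fun _ => ind_nonneg _) (by linarith)
      (h.sum_union_le hG u) (h.sum_rest_le hG))
    refine Finset.sum_le_sum fun p _ => Finset.sum_le_sum fun q _ => ?_
    simp only [g, ← ind_and]
    exact ind_mono (by tauto)
  · intro G hG
    refine le_trans ?_ (sum_four_mul_le (α := fun p => ind ((G ⊔ H₂).Adj u p))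
      (β := fun p q => ind ((G \ H₁).Adj p q)) (γ := fun a => ind ((G ⊔ H₂).Adj v a))
      (ε := fun a b => ind ((G \ H₁).Adj a b)) (fun _ => ind_nonneg _)
      (fun _ _ => ind_nonneg _) (fun _ => ind_nonneg _) (by linarith) (by positivity)
      (by linarith) (h.sum_union_le hG u) (h.sum_rest_le hG) (h.sum_union_le hG v)
      (h.sum_rest_le hG))
    refine Finset.sum_le_sum fun p _ => Finset.sum_le_sum fun q _ => Finset.sum_le_sum fun a _ =>
      Finset.sum_le_sum fun b _ => ?_
    simp only [g, ← ind_and]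
    refine ind_mono ?_
    rintro ⟨hsw, -, hpu, hpv, hau, hav, h1, h2⟩
    have h3 := hsw.ne
    have h4 : (G ⊔ H₂).Adj u p ∧ (G ⊔ H₂).Adj v a := by
      simp only [_root_.switch, SamePair, SimpleGraph.sup_adj] at h1 h2 ⊢
      grind
    exact ⟨⟨h4.1, hsw.pq⟩, h4.2, hsw.ab⟩

lemma Xuv_eq (H₁ H₂ : SimpleGraph (Fin n)) (u v : Fin n) (G : SimpleGraph (Fin n)) :
    (Xuv H₁ H₂ u v G : ℝ) = ∑ x, ∑ y, ind ((G \ H₁).Adj x y ∧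
      x ≠ u ∧ x ≠ v ∧ y ≠ u ∧ y ≠ v ∧ (G ⊔ H₂).Adj u x ∧ (G ⊔ H₂).Adj v y) := by
  rw [← Fintype.sum_prod_type', sum_ind_eq_ncard, Xuv, ← Nat.card_coe_set_eq]
  simp only [SimpleGraph.sdiff_adj, and_assoc]
  rfl

lemma Xu_eq (h : DegreeData K D d dt H₁ H₂ u v) (hG : Admissible d H₁ H₂ u v G) :
    (Xu H₁ H₂ u v G : ℝ) = ∑ᶠ x ∈ (H₁ ⊔ H₂).neighborSet u, (dt x : ℝ) +
      ∑ x, ind ((G \ H₁).Adj u x ∧ x ≠ v) * ((dt x - 1 : ℕ) : ℝ) -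
      ∑ x, ind ((G \ H₁).Adj v x ∧ x ≠ u ∧ (G ⊔ H₂).Adj u x) := by
  have e1 : ∑ᶠ x ∈ (H₁ ⊔ H₂).neighborSet u, (dt x : ℝ) =
      ∑ x, ind ((H₁ ⊔ H₂).Adj u x) * dt x := by
    classical
    rw [finsum_mem_def, finsum_eq_sum_of_fintype]
    refine Finset.sum_congr rfl fun x _ => ?_
    by_cases hx : (H₁ ⊔ H₂).Adj u x
    · rw [ind_of_true hx, Set.indicator_of_mem (by exact hx), one_mul]
    · rw [ind_of_false hx, Set.indicator_of_notMem (by exact hx), zero_mul]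
  have e2 : (Xu H₁ H₂ u v G : ℝ) = ∑ x, ∑ y, ind ((G \ H₁).Adj x y ∧
      x ≠ u ∧ x ≠ v ∧ y ≠ u ∧ y ≠ v ∧ (G ⊔ H₂).Adj u x) := by
    rw [← Fintype.sum_prod_type', sum_ind_eq_ncard, Xu, ← Nat.card_coe_set_eq]
    simp only [SimpleGraph.sdiff_adj, and_assoc]
    rfl
  rw [e1, e2, ← Finset.sum_add_distrib, ← Finset.sum_sub_distrib]
  refine Finset.sum_congr rfl fun x _ => ?_
  have huv := h.ne
  have hna := h.not_adj
  by_cases hx : (G ⊔ H₂).Adj u x ∧ x ≠ v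
  · have hxu : x ≠ u := hx.1.ne'
    have e3 : ∑ y, ind ((G \ H₁).Adj x y ∧
        x ≠ u ∧ x ≠ v ∧ y ≠ u ∧ y ≠ v ∧ (G ⊔ H₂).Adj u x) =
        dt x - ind ((G \ H₁).Adj u x) - ind ((G \ H₁).Adj v x) := by
      rw [← h.sum_rest hG, ← sum_ind_eq_mul u fun y => ind ((G \ H₁).Adj y x),
        ← sum_ind_eq_mul v fun y => ind ((G \ H₁).Adj y x), ← Finset.sum_sub_distrib,
        ← Finset.sum_sub_distrib]
      refine Finset.sum_congr rfl fun y _ => ?_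
      have hxy := (G \ H₁).adj_comm y x
      by_cases h1 : (G \ H₁).Adj x y
      · rw [ind_of_true h1, ind_of_true (hxy.2 h1)]
        by_cases hy : y = u
        · rw [ind_of_false (by tauto), ind_of_true hy, ind_of_false (by rwa [hy])]; ring
        · by_cases hy' : y = v
          · rw [ind_of_false (by tauto), ind_of_false hy, ind_of_true hy']; ring
          · rw [ind_of_true (by tauto), ind_of_false hy, ind_of_false hy']; ring
      · rw [ind_of_false h1, ind_of_false (mt hxy.1 h1), ind_of_false (by tauto)]; ring
    rw [e3]
    have h4 : ind ((G \ H₁).Adj v x ∧ x ≠ u ∧ (G ⊔ H₂).Adj u x) = ind ((G \ H₁).Adj v x) :=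
      ind_congr (by tauto)
    rw [h4]
    by_cases h5 : (G \ H₁).Adj u x
    · have h6 : ¬ (H₁ ⊔ H₂).Adj u x := by
        have := hG.disj u x
        simp only [SimpleGraph.sup_adj, SimpleGraph.sdiff_adj] at *
        tauto
      have h7 : 1 ≤ dt x := by
        have h8 := h.sum_rest hG x
        have h9 : (1 : ℝ) ≤ dt x := by
          rw [← h8, ← ind_of_true h5.symm]
          exact Finset.single_le_sum (f := fun y => ind ((G \ H₁).Adj x y))
            (fun y _ => ind_nonneg _) (Finset.mem_univ u)
        exact_mod_cast h9
      have h8 : (G \ H₁).Adj u x ∧ x ≠ v := ⟨h5, hx.2⟩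
      rw [ind_of_true h8, ind_of_true h5, ind_of_false h6]
      push_cast [h7]
      ring
    · have h6 : (H₁ ⊔ H₂).Adj u x := by
        simp only [SimpleGraph.sup_adj, SimpleGraph.sdiff_adj] at *
        tauto
      have h8 : ¬ ((G \ H₁).Adj u x ∧ x ≠ v) := fun h8 => h5 h8.1
      rw [ind_of_false h8, ind_of_false h5, ind_of_true h6]
      ring
  · have h1 : ¬ (H₁ ⊔ H₂).Adj u x := by
      intro h1
      apply hx
      refine ⟨?_, fun hxv => hna (hxv ▸ h1)⟩
      have := hG.le u x
      simp only [SimpleGraph.sup_adj] at *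
      tauto
    have h2 : ¬ ((G \ H₁).Adj u x ∧ x ≠ v) := by
      simp only [SimpleGraph.sup_adj, SimpleGraph.sdiff_adj] at *
      tauto
    have h3 : ¬ ((G \ H₁).Adj v x ∧ x ≠ u ∧ (G ⊔ H₂).Adj u x) := by
      rintro ⟨h3, -, h4⟩
      exact h3.ne (not_not.1 fun hvx => hx ⟨h4, fun hxv => hvx hxv.symm⟩)
    rw [ind_of_false h1, ind_of_false h2, ind_of_false h3]
    simp only [zero_mul, add_zero, sub_zero]
    exact Finset.sum_eq_zero fun y _ => ind_of_false (by tauto)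

end DegreeData

lemma expect_eq (P : SimpleGraph (Fin n) → Prop) (X : SimpleGraph (Fin n) → ℝ) :
    expect P X = (∑ G, ind (P G) * X G) / ∑ G, ind (P G) := by
  classical
  rw [expect, sum_ind_eq_ncard, ← Nat.card_coe_set_eq, finsum_mem_def,
    finsum_eq_sum_of_fintype]
  congr 1
  refine Finset.sum_congr rfl fun G _ => ?_
  by_cases hG : P G
  · rw [ind_of_true hG, Set.indicator_of_mem (by exact hG), one_mul]
  · rw [ind_of_false hG, Set.indicator_of_notMem (by exact hG), zero_mul]

lemma Xv_eq_Xu (H₁ H₂ : SimpleGraph (Fin n)) (u v : Fin n) (G : SimpleGraph (Fin n)) :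
    Xv H₁ H₂ u v G = Xu H₁ H₂ v u G := by
  refine Nat.card_congr ((Equiv.prodComm _ _).subtypeEquiv fun p => ?_)
  have h1 := G.adj_comm p.1 p.2
  have h2 := H₁.adj_comm p.1 p.2
  simp only [Equiv.prodComm_apply, Prod.fst_swap, Prod.snd_swap]
  tauto

lemma admissible_comm : Admissible d H₁ H₂ u v G ↔ Admissible d H₁ H₂ v u G :=
  ⟨fun h => ⟨h.1, h.2, h.3.symm, h.4⟩, fun h => ⟨h.1, h.2, h.3.symm, h.4⟩⟩

namespace DegreeData

lemma expect_Xuv_mul_le (h : DegreeData K D d dt H₁ H₂ u v)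
    (hne : ∃ G, Admissible d H₁ H₂ u v G) :
    expect (Admissible d H₁ H₂ u v) (fun G => (Xuv H₁ H₂ u v G : ℝ)) * ∑ a, (dt a : ℝ) ≤
      ((K + 1) * (2 * K + 6) + (K + 1) ^ 2) * D ^ 4 := by
  have hN : 0 < ∑ G, ind (Admissible d H₁ H₂ u v G) := by
    obtain ⟨G, hG⟩ := hne
    exact Finset.sum_pos' (fun G _ => ind_nonneg _)
      ⟨G, Finset.mem_univ G, by rw [ind_of_true hG]; norm_num⟩
  rw [expect_eq, div_mul_eq_mul_div, div_le_iff₀ hN]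
  simp only [Xuv_eq]
  linarith [h.sum_path_le]

lemma abs_expect_Xu_sub_mul_le (h : DegreeData K D d dt H₁ H₂ u v)
    (hne : ∃ G, Admissible d H₁ H₂ u v G) :
    |(expect (Admissible d H₁ H₂ u v) (fun G => (Xu H₁ H₂ u v G : ℝ)) -
        ∑ᶠ x ∈ (H₁ ⊔ H₂).neighborSet u, (dt x : ℝ)) * ∑ a, (dt a : ℝ) -
      (dt u - 1) * ∑ a, dt a * ((dt a - 1 : ℕ) : ℝ)| ≤ (5 * K + 13) * D ^ 4 := by
  have hK := h.one_le_K
  have hD := h.one_le_D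
  have hN : 0 < ∑ G, ind (Admissible d H₁ H₂ u v G) := by
    obtain ⟨G, hG⟩ := hne
    exact Finset.sum_pos' (fun G _ => ind_nonneg _)
      ⟨G, Finset.mem_univ G, by rw [ind_of_true hG]; norm_num⟩
  have h1 := h.abs_sum_neighbour_weight_sub_le (w := fun x => ((dt x - 1 : ℕ) : ℝ))
    (fun a => Nat.cast_nonneg _)
    (fun a => (Nat.cast_le.2 (Nat.sub_le _ _)).trans (h.dt_le a))
  have h2 := h.sum_common_neighbour_le
  have h3 : 0 ≤ (∑ G, ind (Admissible d H₁ H₂ u v G) *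
      ∑ x, ind ((G \ H₁).Adj v x ∧ x ≠ u ∧ (G ⊔ H₂).Adj u x)) * ∑ a, (dt a : ℝ) :=
    mul_nonneg (Finset.sum_nonneg fun G _ => mul_nonneg (ind_nonneg _)
      (Finset.sum_nonneg fun x _ => ind_nonneg _)) (Finset.sum_nonneg fun a _ => Nat.cast_nonneg _)
  have h4 : ∑ G, ind (Admissible d H₁ H₂ u v G) * (Xu H₁ H₂ u v G : ℝ) =
      (∑ G, ind (Admissible d H₁ H₂ u v G)) * ∑ᶠ x ∈ (H₁ ⊔ H₂).neighborSet u, (dt x : ℝ) +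
      ∑ G, ind (Admissible d H₁ H₂ u v G) *
        ∑ x, ind ((G \ H₁).Adj u x ∧ x ≠ v) * ((dt x - 1 : ℕ) : ℝ) -
      ∑ G, ind (Admissible d H₁ H₂ u v G) *
        ∑ x, ind ((G \ H₁).Adj v x ∧ x ≠ u ∧ (G ⊔ H₂).Adj u x) := by
    rw [Finset.sum_mul, ← Finset.sum_add_distrib, ← Finset.sum_sub_distrib]
    refine Finset.sum_congr rfl fun G _ => ?_
    rw [← mul_add, ← mul_sub]
    exact ind_mul_congr fun hG => h.Xu_eq hG
  rw [expect_eq, h4]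
  set N := ∑ G, ind (Admissible d H₁ H₂ u v G)
  set f := ∑ G, ind (Admissible d H₁ H₂ u v G) *
    ∑ x, ind ((G \ H₁).Adj u x ∧ x ≠ v) * ((dt x - 1 : ℕ) : ℝ)
  set T := ∑ G, ind (Admissible d H₁ H₂ u v G) *
    ∑ x, ind ((G \ H₁).Adj v x ∧ x ≠ u ∧ (G ⊔ H₂).Adj u x)
  set m := ∑ᶠ x ∈ (H₁ ⊔ H₂).neighborSet u, (dt x : ℝ)
  set Mt := ∑ a, (dt a : ℝ)
  set M2 := ∑ a, dt a * ((dt a - 1 : ℕ) : ℝ)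
  have h5 : ((N * m + f - T) / N - m) * Mt - (dt u - 1) * M2 =
      (f * Mt - N * ((dt u - 1) * M2) - T * Mt) / N := by
    field_simp
    ring
  rw [h5, abs_div, abs_of_pos hN, div_le_iff₀ hN]
  have h6 : 0 ≤ N * ((2 * K + 6) * D ^ 4) := by positivity
  have h7 : 0 ≤ N * ((3 * K + 7) * D ^ 4) := by positivity
  rw [abs_le] at h1 ⊢
  constructor <;> linarith

end DegreeData

end Switching

/-- Estimates on the expected numbers of forward switchings. -/
theorem stmt15 (K c : ℝ) (hK : 1 ≤ K) (hc : 0 < c) :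
    ∃ C δ : ℝ, 0 < C ∧ 0 < δ ∧
      ∀ (n : ℕ) (d : Fin n → ℕ) (M Δ : ℕ),
        M = ∑ i, d i → Δ = Finset.univ.sup d →
        Even M → (Δ : ℝ) ^ 2 ≤ δ * M →
        ∀ H₁ H₂ : SimpleGraph (Fin n),
        Disjoint H₁.edgeSet H₂.edgeSet →
        (∀ i, deg H₁ i ≤ d i) →
        (maxDeg H₂ : ℝ) ≤ K * Δ →
        ∀ dt : Fin n → ℕ, (∀ i, dt i = d i - deg H₁ i) →
        ∀ Mt Mt2 : ℕ, Mt = ∑ i, dt i → Mt2 = ∑ i, dt i * (dt i - 1) →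
        c * M ≤ (Mt : ℝ) →
        ∀ u v : Fin n, u ≠ v → ¬ (H₁ ⊔ H₂).Adj u v →
        ∀ basePlus : SimpleGraph (Fin n) → Prop,
        basePlus = (fun G => (∀ i, deg G i = d i) ∧ H₁ ≤ G ∧ G.Adj u v ∧
          Disjoint G.edgeSet H₂.edgeSet) →
        (∃ G, basePlus G) →
        |expect basePlus (fun G => (Xuv H₁ H₂ u v G : ℝ))| ≤ C * (Δ : ℝ) ^ 4 / M ∧
        |expect basePlus (fun G => (Xu H₁ H₂ u v G : ℝ))
            - ((∑ᶠ x ∈ (H₁ ⊔ H₂).neighborSet u, (dt x : ℝ))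
              + ((dt u : ℝ) - 1) * (Mt2 : ℝ) / (Mt : ℝ))| ≤ C * (Δ : ℝ) ^ 4 / M ∧
        |expect basePlus (fun G => (Xv H₁ H₂ u v G : ℝ))
            - ((∑ᶠ y ∈ (H₁ ⊔ H₂).neighborSet v, (dt y : ℝ))
              + ((dt v : ℝ) - 1) * (Mt2 : ℝ) / (Mt : ℝ))| ≤ C * (Δ : ℝ) ^ 4 / M := by
  have hA1 : 0 ≤ (K + 1) * (2 * K + 6) + (K + 1) ^ 2 := by positivity
  have hA2 : 0 ≤ 5 * K + 13 := by positivity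
  refine ⟨((K + 1) * (2 * K + 6) + (K + 1) ^ 2 + (5 * K + 13)) / c, 1, by positivity,
    one_pos, ?_⟩
  rintro n d M Δ rfl rfl - - H₁ H₂ - hH₁ hH₂ dt hdt Mt Mt2 rfl rfl hMt u v huv hna basePlus
    hbase hne
  set D : ℝ := ((Finset.univ.sup d : ℕ) : ℝ) with hDdef
  have hd : ∀ i, (d i : ℝ) ≤ D := fun i =>
    Nat.cast_le.2 (Finset.le_sup (f := d) (Finset.mem_univ i))
  have hbase' : basePlus = Admissible d H₁ H₂ u v := by
    subst hbase
    funext G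
    refine propext ⟨fun ⟨h1, h2, h3, h4⟩ => ⟨h1, fun x y hxy => h2 hxy, h3, fun x y hxy hxy' => ?_⟩,
      fun h => ⟨h.deg_eq, fun x y hxy => h.le x y hxy, h.adj, ?_⟩⟩
    · exact Set.disjoint_left.1 h4 (G.mem_edgeSet.2 hxy) (H₂.mem_edgeSet.2 hxy')
    · rw [Set.disjoint_left]
      intro e
      induction e with
      | _ x y => exact h.disj x y
  rw [hbase'] at hne ⊢
  have hdu : (1 : ℝ) ≤ d u := by
    obtain ⟨G, hG⟩ := hne
    rw [← hG.deg_eq u, deg_eq_sum, ← ind_of_true hG.adj]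
    exact Finset.single_le_sum (f := fun y => ind (G.Adj u y)) (fun y _ => ind_nonneg _)
      (Finset.mem_univ v)
  have hM : (0 : ℝ) < ((∑ i, d i : ℕ) : ℝ) :=
    lt_of_lt_of_le (by linarith)
      (Nat.cast_le.2 (Finset.single_le_sum (fun i _ => Nat.zero_le (d i)) (Finset.mem_univ u)))
  have h : DegreeData K D d dt H₁ H₂ u v :=
    { one_le_K := hK
      one_le_D := hdu.trans (hd u)
      d_le := hd
      dt_eq := fun i => by rw [hdt, Nat.cast_sub (hH₁ i)]
      deg_le := fun i => le_trans
        (Nat.cast_le.2 (Finset.le_sup (f := deg H₂) (Finset.mem_univ i))) hH₂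
      ne := huv
      not_adj := hna }
  have hD4 : 0 ≤ D ^ 4 := by positivity
  set M : ℝ := ((∑ i, d i : ℕ) : ℝ)
  set Mt : ℝ := ((∑ i, dt i : ℕ) : ℝ) with hMtdef
  have hMt0 : 0 < Mt := lt_of_lt_of_le (mul_pos hc hM) hMt
  have hMt' : ∑ i, (dt i : ℝ) = Mt := by rw [hMtdef, Nat.cast_sum]
  have hMt2 : ∑ a, dt a * ((dt a - 1 : ℕ) : ℝ) = ((∑ i, dt i * (dt i - 1) : ℕ) : ℝ) := by
    rw [Nat.cast_sum]
    exact Finset.sum_congr rfl fun a _ => (Nat.cast_mul _ _).symm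
  have transfer : ∀ x A : ℝ, 0 ≤ A →
      A ≤ (K + 1) * (2 * K + 6) + (K + 1) ^ 2 + (5 * K + 13) → |x * Mt| ≤ A * D ^ 4 →
      |x| ≤ ((K + 1) * (2 * K + 6) + (K + 1) ^ 2 + (5 * K + 13)) / c * D ^ 4 / M := by
    intro x A hA hA' hx
    rw [abs_mul, abs_of_pos hMt0] at hx
    rw [div_mul_eq_mul_div, div_div, le_div_iff₀ (mul_pos hc hM)]
    calc |x| * (c * M) ≤ |x| * Mt := mul_le_mul_of_nonneg_left hMt (abs_nonneg x)
      _ ≤ A * D ^ 4 := hx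
      _ ≤ _ := mul_le_mul_of_nonneg_right hA' hD4
  have hXu : ∀ u v, DegreeData K D d dt H₁ H₂ u v → (∃ G, Admissible d H₁ H₂ u v G) →
      |expect (Admissible d H₁ H₂ u v) (fun G => (Xu H₁ H₂ u v G : ℝ)) -
        ((∑ᶠ x ∈ (H₁ ⊔ H₂).neighborSet u, (dt x : ℝ)) +
          ((dt u : ℝ) - 1) * ((∑ i, dt i * (dt i - 1) : ℕ) : ℝ) / Mt)| ≤
      ((K + 1) * (2 * K + 6) + (K + 1) ^ 2 + (5 * K + 13)) / c * D ^ 4 / M := by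
    intro u v h hne
    refine transfer _ _ hA2 (by linarith) ?_
    have key := h.abs_expect_Xu_sub_mul_le hne
    rw [hMt', hMt2] at key
    convert key using 2
    field_simp
    ring
  refine ⟨transfer _ _ hA1 (by linarith) ?_, hXu u v h hne, ?_⟩
  · have key := h.expect_Xuv_mul_le hne
    rw [hMt'] at key
    rwa [abs_of_nonneg]
    rw [expect_eq]
    exact mul_nonneg (div_nonneg (Finset.sum_nonneg fun G _ =>
      mul_nonneg (ind_nonneg _) (Nat.cast_nonneg _)) (Finset.sum_nonneg fun G _ => ind_nonneg _))
      hMt0.le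
  · have hcomm : Admissible d H₁ H₂ u v = Admissible d H₁ H₂ v u :=
      funext fun G => propext admissible_comm
    rw [hcomm] at hne ⊢
    simp only [Xv_eq_Xu]
    exact hXu v u h.symm hne
end
end
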